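/- Two-scale compactness for gradients: let E be a sequence of positive reals tending to 0 and suppose (u_ε)_{ε∈E} is bounded in L²(0,T;H¹(Q)). Then there is a subsequence E′ of E such that, as E′ ∋ ε → 0: u_ε → u₀ in L²(Q_T)-weak two-scale; u_ε → ũ₀ in L²(0,T;H¹(Q))-weak; and ∂u_ε/∂x_j → ∂u₀/∂x_j + ∂u₁/∂y_j in L²(Q_T)-weak two-scale for 1 ≤ j ≤ N, where u₀ ∈ L²(0,T;L²(𝒯;H¹(Q))) with ũ₀ = ∫_𝒯 u₀ dτ and u₁ ∈ L²(Q_T;L²(𝒯;H¹_#(𝒴))). If moreover (∂u_ε/∂t)_{ε∈E} is bounded in L²(0,T;(H¹(Q))*), then u₀ is independent of τ, i.e. u₀ ∈ L²(0,T;H¹(Q)). -/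

import Mathlib

open MeasureTheory Filter Set

noncomputable section

/-- Points of `ℝ^N`. -/
abbrev Vn (N : ℕ) := Fin N → ℝ

/-- The unit cell `𝒴 = (0,1)^N`. -/
def cellY (N : ℕ) : Set (Vn N) := Set.univ.pi fun _ => Set.Ioo (0:ℝ) 1

/-- The unit time cell `𝒯 = (0,1)`. -/
def cellT : Set ℝ := Set.Ioo 0 1

/-- `𝒵 = 𝒯 × 𝒴`-periodicity of a function of the fast variables `(τ,y)`. -/
def ZPer {N : ℕ} (w : ℝ → Vn N → ℝ) : Prop :=
  ∀ (τ : ℝ) (y : Vn N) (l : ℤ) (kk : Fin N → ℤ), w (τ + l) (fun i => y i + kk i) = w τ y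

/-- Admissible test functions: `ψ ∈ L^{p'}(Q_T; C_per(𝒯×𝒴))`, i.e. `ψ = ψ(t,x,τ,y)`
is jointly continuous, `𝒵`-periodic in `(τ,y)`, and dominated in modulus by an
`L^{p'}(Q_T)` function of `(t,x)`. -/
structure AdmissibleTest (N : ℕ) (QT : Set (ℝ × Vn N)) (p' : ℝ)
    (ψ : ℝ → Vn N → ℝ → Vn N → ℝ) : Prop where
  cont : Continuous fun q : (ℝ × Vn N) × ℝ × Vn N => ψ q.1.1 q.1.2 q.2.1 q.2.2
  per : ∀ t x, ZPer (ψ t x)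
  dom : ∃ h : ℝ × Vn N → ℝ, MemLp h (ENNReal.ofReal p') (volume.restrict QT) ∧
      ∀ t x τ y, |ψ t x τ y| ≤ h (t, x)

/-- Weak two-scale convergence in `L^p(Q_T)` of the sequence `u n` (with scale `ε n`)
to `u₀ ∈ L^p(Q_T; L^p_per(𝒯×𝒴))` (Definition 3.1 of the paper). -/
def WeakTwoScale (N : ℕ) (QT : Set (ℝ × Vn N)) (p : ℝ) (ε : ℕ → ℝ)
    (u : ℕ → ℝ × Vn N → ℝ) (u₀ : ℝ × Vn N → ℝ → Vn N → ℝ) : Prop :=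
  ∀ ψ : ℝ → Vn N → ℝ → Vn N → ℝ, AdmissibleTest N QT (p / (p - 1)) ψ →
    Tendsto (fun n => ∫ q in QT, u n q * ψ q.1 q.2 (q.1 / ε n) (fun i => q.2 i / ε n))
      atTop
      (nhds (∫ q in QT, ∫ τ in cellT, ∫ y in cellY N, u₀ q τ y * ψ q.1 q.2 τ y))

/-- Strong two-scale convergence in `L^p(Q_T)`: weak two-scale convergence together with
convergence of the `L^p` norms. -/
def StrongTwoScale (N : ℕ) (QT : Set (ℝ × Vn N)) (p : ℝ) (ε : ℕ → ℝ)
    (u : ℕ → ℝ × Vn N → ℝ) (u₀ : ℝ × Vn N → ℝ → Vn N → ℝ) : Prop :=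
  WeakTwoScale N QT p ε u u₀ ∧
    Tendsto (fun n => ∫ q in QT, |u n q| ^ p) atTop
      (nhds (∫ q in QT, ∫ τ in cellT, ∫ y in cellY N, |u₀ q τ y| ^ p))

/-- Partial derivative `∂f/∂y_j` of a function on `ℝ^N`. -/
def pdN {N : ℕ} (f : Vn N → ℝ) (j : Fin N) (y : Vn N) : ℝ := fderiv ℝ f y (Pi.single j 1)

/-- abstract two-scale compactness -/
lemma tsc_abstract {K : Type*} [MetricSpace K] [CompactSpace K] [MeasurableSpace K] [BorelSpace K]
    (m : Measure K) [IsFiniteMeasure m] {Ω : Type*} [MeasurableSpace Ω] (μ : Measure Ω)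
    [IsFiniteMeasure μ] (ρ : ℕ → Ω → K) (hρ : ∀ n, Measurable (ρ n))
    (heq : ∀ Ψ : C(K, ℝ), Tendsto (fun n => ∫ q, Ψ (ρ n q) ∂μ) atTop (nhds (∫ p, Ψ p ∂m)))
    (u : ℕ → Ω → ℝ) (hu : ∀ n, MemLp (u n) 2 μ) (C : ℝ) (hC : ∀ n, ∫ q, (u n q) ^ 2 ∂μ ≤ C) :
    ∃ φ : ℕ → ℕ, StrictMono φ ∧ ∃ V : K → ℝ, StronglyMeasurable V ∧ MemLp V 2 m ∧
      ∀ Ψ : C(K, ℝ), Tendsto (fun n => ∫ q, u (φ n) q * Ψ (ρ (φ n) q) ∂μ) atTop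
        (nhds (∫ p, V p * Ψ p ∂m)) := by
  have hC0 : 0 ≤ C := le_trans (integral_nonneg fun q => sq_nonneg _) (hC 0)
  -- test functions along ρ are L2
  have hΨm : ∀ n (Ψ : C(K, ℝ)), MemLp (fun q => Ψ (ρ n q)) 2 μ := fun n Ψ =>
    MemLp.of_bound ((Ψ.continuous.measurable.comp (hρ n)).aestronglyMeasurable) ‖Ψ‖
      (Eventually.of_forall fun q => Ψ.norm_coe_le_norm _)
  -- Cauchy-Schwarz
  have hint : ∀ n (Ψ : C(K, ℝ)), Integrable (fun q => u n q * Ψ (ρ n q)) μ := fun n Ψ =>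
    (hu n).integrable_mul (hΨm n Ψ)
  have hCS : ∀ n (Ψ : C(K, ℝ)), |∫ q, u n q * Ψ (ρ n q) ∂μ| ≤
      Real.sqrt C * Real.sqrt (∫ q, (Ψ (ρ n q)) ^ 2 ∂μ) := by
    intro n Ψ
    have h1 := integral_mul_le_Lp_mul_Lq_of_nonneg (μ := μ) (p := 2) (q := 2)
      Real.HolderConjugate.two_two (f := fun q => |u n q|) (g := fun q => |Ψ (ρ n q)|)
      (Eventually.of_forall fun q => abs_nonneg _) (Eventually.of_forall fun q => abs_nonneg _)
      (by simp only [ENNReal.ofReal_ofNat]; exact (hu n).abs) (by simp only [ENNReal.ofReal_ofNat]; exact (hΨm n Ψ).abs)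
    calc |∫ q, u n q * Ψ (ρ n q) ∂μ| ≤ ∫ q, |u n q * Ψ (ρ n q)| ∂μ := abs_integral_le_integral_abs
      _ = ∫ q, |u n q| * |Ψ (ρ n q)| ∂μ := by simp_rw [abs_mul]
      _ ≤ _ := h1
      _ = Real.sqrt (∫ q, (u n q) ^ 2 ∂μ) * Real.sqrt (∫ q, (Ψ (ρ n q)) ^ 2 ∂μ) := by
          simp [Real.sqrt_eq_rpow]
      _ ≤ _ := by gcongr; exact hC n
  let F0 : ℕ → C(K, ℝ) →ₗ[ℝ] ℝ := fun n =>
    { toFun := fun Ψ => ∫ q, u n q * Ψ (ρ n q) ∂μ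
      map_add' := fun Ψ Φ => by
        rw [← integral_add (hint n Ψ) (hint n Φ)]; simp [mul_add]
      map_smul' := fun c Ψ => by
        simp only [ContinuousMap.smul_apply, smul_eq_mul, RingHom.id_apply]
        rw [← integral_const_mul]; congr 1; ext q; ring }
  have hF0 : ∀ n Ψ, ‖F0 n Ψ‖ ≤ (Real.sqrt C * Real.sqrt (μ.real univ)) * ‖Ψ‖ := by
    intro n Ψ
    refine (hCS n Ψ).trans ?_
    rw [mul_assoc]
    gcongr
    rw [← Real.sqrt_sq (norm_nonneg Ψ), ← Real.sqrt_mul (by positivity)]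
    apply Real.sqrt_le_sqrt
    calc ∫ q, (Ψ (ρ n q)) ^ 2 ∂μ ≤ ∫ q, ‖Ψ‖ ^ 2 ∂μ := by
          apply integral_mono ((hΨm n Ψ).integrable_sq) (integrable_const _)
          intro q
          have := Ψ.norm_coe_le_norm (ρ n q)
          simp only
          rw [← sq_abs]
          gcongr
          exact this
      _ = _ := by simp
  let F : ℕ → StrongDual ℝ C(K, ℝ) := fun n => (F0 n).mkContinuous _ (hF0 n)
  obtain ⟨L, -, φ, hφ, hL⟩ := WeakDual.isSeqCompact_closedBall (𝕜 := ℝ) (E := C(K, ℝ)) (0 : StrongDual ℝ C(K,ℝ))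
    (Real.sqrt C * Real.sqrt (μ.real univ)) (x := fun n => StrongDual.toWeakDual (F n)) (by
      intro n
      simp only [mem_preimage, Metric.mem_closedBall, dist_zero_right]
      show ‖F n‖ ≤ _
      exact LinearMap.mkContinuous_norm_le _ (by positivity) _)
  have hL' : ∀ Ψ : C(K, ℝ), Tendsto (fun n => ∫ q, u (φ n) q * Ψ (ρ (φ n) q) ∂μ) atTop
      (nhds (L Ψ)) := by
    intro Ψ
    have := (WeakDual.eval_continuous (𝕜 := ℝ) (E := C(K, ℝ)) Ψ).continuousAt.tendsto.comp hL
    exact this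
  have hLb : ∀ Ψ : C(K, ℝ), ‖(L : C(K, ℝ) →ₗ[ℝ] ℝ) Ψ‖ ≤ Real.sqrt C * ‖(ContinuousMap.toLp 2 m ℝ : C(K, ℝ) →L[ℝ] Lp ℝ 2 m) Ψ‖ := by
    intro Ψ
    have h1 : Tendsto (fun n => |∫ q, u (φ n) q * Ψ (ρ (φ n) q) ∂μ|) atTop (nhds |L Ψ|) :=
      (hL' Ψ).abs
    have h2 := ((heq (Ψ ^ 2)).comp hφ.tendsto_atTop).sqrt.const_mul (Real.sqrt C)
    have h3 := le_of_tendsto_of_tendsto' h1 h2 (fun n => hCS (φ n) Ψ)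
    refine h3.trans (le_of_eq ?_)
    congr 1
    simp only [ContinuousMap.pow_apply]
    rw [Real.sqrt_eq_iff_mul_self_eq (integral_nonneg fun p => sq_nonneg (Ψ p)) (norm_nonneg _),
      ← real_inner_self_eq_norm_mul_norm, ContinuousMap.inner_toLp]
    simp [sq]
  have hext := LinearMap.extendOfNorm_eq (f := (L : C(K, ℝ) →ₗ[ℝ] ℝ))
    (e := ((ContinuousMap.toLp 2 m ℝ : C(K, ℝ) →L[ℝ] Lp ℝ 2 m) : C(K, ℝ) →ₗ[ℝ] Lp ℝ 2 m))
    (ContinuousMap.toLp_denseRange ℝ m ℝ (by simp)) ⟨_, hLb⟩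
  set Lx := LinearMap.extendOfNorm (L : C(K, ℝ) →ₗ[ℝ] ℝ)
    ((ContinuousMap.toLp 2 m ℝ : C(K, ℝ) →L[ℝ] Lp ℝ 2 m) : C(K, ℝ) →ₗ[ℝ] Lp ℝ 2 m)
  set V0 : Lp ℝ 2 m := (InnerProductSpace.toDual ℝ (Lp ℝ 2 m)).symm Lx with hV0
  refine ⟨φ, hφ, V0, Lp.stronglyMeasurable _, Lp.memLp _, fun Ψ => ?_⟩
  have h4 : L Ψ = ∫ p, V0 p * Ψ p ∂m := by
    have h5 : inner ℝ V0 ((ContinuousMap.toLp 2 m ℝ : C(K, ℝ) →L[ℝ] Lp ℝ 2 m) Ψ) = L Ψ := by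
      rw [hV0, InnerProductSpace.toDual_symm_apply]
      exact hext Ψ
    rw [← h5, L2.inner_def]
    apply integral_congr_ae
    filter_upwards [ContinuousMap.coeFn_toLp (p := 2) (𝕜 := ℝ) m Ψ] with p hp
    rw [hp]
    simp [mul_comm]
  rw [← h4]
  exact hL' Ψ

lemma tsc_family {K : Type*} [MetricSpace K] [CompactSpace K] [MeasurableSpace K] [BorelSpace K]
    (m : Measure K) [IsFiniteMeasure m] {Ω : Type*} [MeasurableSpace Ω] (μ : Measure Ω)
    [IsFiniteMeasure μ] (ρ : ℕ → Ω → K) (hρ : ∀ n, Measurable (ρ n))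
    (heq : ∀ Ψ : C(K, ℝ), Tendsto (fun n => ∫ q, Ψ (ρ n q) ∂μ) atTop (nhds (∫ p, Ψ p ∂m)))
    {ι : Type*} [Fintype ι]
    (u : ι → ℕ → Ω → ℝ) (hu : ∀ i n, MemLp (u i n) 2 μ) (C : ℝ)
    (hC : ∀ i n, ∫ q, (u i n q) ^ 2 ∂μ ≤ C) :
    ∃ φ : ℕ → ℕ, StrictMono φ ∧ ∃ V : ι → K → ℝ, ∀ i, StronglyMeasurable (V i) ∧ MemLp (V i) 2 m ∧
      ∀ Ψ : C(K, ℝ), Tendsto (fun n => ∫ q, u i (φ n) q * Ψ (ρ (φ n) q) ∂μ) atTop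
        (nhds (∫ p, V i p * Ψ p ∂m)) := by
  classical
  suffices h : ∀ s : Finset ι, ∃ φ : ℕ → ℕ, StrictMono φ ∧ ∃ V : ι → K → ℝ, ∀ i ∈ s,
      StronglyMeasurable (V i) ∧ MemLp (V i) 2 m ∧
      ∀ Ψ : C(K, ℝ), Tendsto (fun n => ∫ q, u i (φ n) q * Ψ (ρ (φ n) q) ∂μ) atTop
        (nhds (∫ p, V i p * Ψ p ∂m)) by
    obtain ⟨φ, hφ, V, hV⟩ := h Finset.univ
    exact ⟨φ, hφ, V, fun i => hV i (Finset.mem_univ i)⟩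
  intro s
  induction s using Finset.induction_on with
  | empty => exact ⟨id, strictMono_id, fun _ _ => 0, by simp⟩
  | insert a s ha ih =>
    obtain ⟨φ, hφ, V, hV⟩ := ih
    obtain ⟨φ', hφ', W, hW1, hW2, hW3⟩ := tsc_abstract m μ (fun n => ρ (φ n)) (fun n => hρ _)
      (fun Ψ => (heq Ψ).comp hφ.tendsto_atTop) (fun n => u a (φ n)) (fun n => hu _ _) C
      (fun n => hC _ _)
    refine ⟨φ ∘ φ', hφ.comp hφ', Function.update V a W, fun i hi => ?_⟩
    by_cases hia : i = a
    · subst hia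
      rw [Function.update_self]
      exact ⟨hW1, hW2, hW3⟩
    · rw [Function.update_of_ne hia]
      have hi' : i ∈ s := by simpa [hia] using hi
      exact ⟨(hV i hi').1, (hV i hi').2.1, fun Ψ => ((hV i hi').2.2 Ψ).comp hφ'.tendsto_atTop⟩

/-- In this file we normalise the measure on `ℝ / ℤ` to have total volume 1. -/
instance instMSCir : MeasureSpace UnitAddCircle := ⟨AddCircle.haarAddCircle⟩

/-- The measure on `ℝ / ℤ` is a Haar measure. -/
instance instHaarCir : Measure.IsAddHaarMeasure (volume : Measure UnitAddCircle) :=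
  inferInstanceAs (Measure.IsAddHaarMeasure AddCircle.haarAddCircle)

/-- The measure on `ℝ / ℤ` is a probability measure. -/
instance instProbCir : IsProbabilityMeasure (volume : Measure UnitAddCircle) :=
  inferInstanceAs (IsProbabilityMeasure AddCircle.haarAddCircle)

/-- Integration against a weight, as a linear functional on test functions. -/
def wInt {K X : Type*} [TopologicalSpace K] [CompactSpace K] [MeasurableSpace K] [BorelSpace K]
    [MeasurableSpace X] (ν : Measure X) (ρ : X → K) (hρ : Measurable ρ) (g : X → ℂ)
    (hg : Integrable g ν) : C(K, ℂ) →ₗ[ℂ] ℂ where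
  toFun Ψ := ∫ x, g x * Ψ (ρ x) ∂ν
  map_add' Ψ Φ := by
    have h : ∀ Ψ : C(K, ℂ), Integrable (fun x => g x * Ψ (ρ x)) ν := fun Ψ =>
      hg.mul_bdd (c := ‖Ψ‖) (Ψ.continuous.measurable.comp hρ).aestronglyMeasurable
        (Eventually.of_forall fun x => Ψ.norm_coe_le_norm _)
    rw [← integral_add (h Ψ) (h Φ)]
    simp [mul_add]
  map_smul' c Ψ := by
    simp only [ContinuousMap.smul_apply, smul_eq_mul, RingHom.id_apply]
    rw [← integral_const_mul]; congr 1; ext q; ring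

lemma wInt_bound {K X : Type*} [TopologicalSpace K] [CompactSpace K] [MeasurableSpace K]
    [BorelSpace K] [MeasurableSpace X] (ν : Measure X) (ρ : X → K) (hρ : Measurable ρ) (g : X → ℂ)
    (hg : Integrable g ν) (Ψ : C(K, ℂ)) : ‖wInt ν ρ hρ g hg Ψ‖ ≤ (∫ x, ‖g x‖ ∂ν) * ‖Ψ‖ := by
  show ‖∫ x, g x * Ψ (ρ x) ∂ν‖ ≤ _
  refine (norm_integral_le_integral_norm _).trans ?_
  rw [← integral_mul_const]
  apply integral_mono_of_nonneg (Eventually.of_forall fun x => norm_nonneg _)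
    (hg.norm.mul_const _)
  refine Eventually.of_forall fun x => ?_
  simp only [norm_mul]
  gcongr
  exact Ψ.norm_coe_le_norm _

lemma tendsto_of_dense_span {E : Type*} [NormedAddCommGroup E] [NormedSpace ℂ E] (S : Set E)
    (hS : (Submodule.span ℂ S).topologicalClosure = ⊤) (L : ℕ → E →ₗ[ℂ] ℂ) (L0 : E →ₗ[ℂ] ℂ)
    (c : ℝ) (hL : ∀ n x, ‖L n x‖ ≤ c * ‖x‖) (hL0 : ∀ x, ‖L0 x‖ ≤ c * ‖x‖)
    (h : ∀ x ∈ S, Tendsto (fun n => L n x) atTop (nhds (L0 x))) (x : E) :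
    Tendsto (fun n => L n x) atTop (nhds (L0 x)) := by
  have h1 : ∀ y ∈ Submodule.span ℂ S, Tendsto (fun n => L n y) atTop (nhds (L0 y)) := by
    intro y hy
    induction hy using Submodule.span_induction with
    | mem y hy => exact h y hy
    | zero => simp
    | add y z _ _ h1 h2 => simpa using h1.add h2
    | smul a y _ h1 => simpa using h1.const_mul a
  rw [Metric.tendsto_atTop]
  intro δ hδ
  have hx : x ∈ closure (Submodule.span ℂ S : Set E) := by
    have : x ∈ (Submodule.span ℂ S).topologicalClosure := by rw [hS]; trivial
    exact this
  obtain ⟨y, hy, hxy⟩ := Metric.mem_closure_iff.1 hx (δ / (3 * (|c| + 1))) (by positivity)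
  obtain ⟨n0, hn0⟩ := Metric.tendsto_atTop.1 (h1 y hy) (δ / 3) (by positivity)
  refine ⟨n0, fun n hn => ?_⟩
  have h2 : ∀ M : E →ₗ[ℂ] ℂ, (∀ x, ‖M x‖ ≤ c * ‖x‖) → dist (M x) (M y) < δ / 3 := by
    intro M hM
    rw [dist_eq_norm, ← map_sub]
    refine (hM _).trans_lt ?_
    rw [dist_eq_norm] at hxy
    calc c * ‖x - y‖ ≤ (|c| + 1) * ‖x - y‖ := by gcongr; linarith [le_abs_self c]
      _ < (|c| + 1) * (δ / (3 * (|c| + 1))) := by gcongr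
      _ = δ / 3 := by field_simp
  have h3 := h2 (L n) (hL n)
  have h4 := h2 L0 hL0
  have h5 := hn0 n hn
  rw [dist_comm] at h4
  calc dist (L n x) (L0 x) ≤ dist (L n x) (L n y) + dist (L n y) (L0 y) + dist (L0 y) (L0 x) :=
        dist_triangle4 _ _ _ _
    _ < δ := by linarith

/-- The compact two-scale space. -/
abbrev KK (B : Type*) (N : ℕ) := (B × UnitAddCircle) × UnitAddTorus (Fin N)

def echar {B : Type*} [TopologicalSpace B] {N : ℕ} (f : C(B, ℂ)) (k0 : ℤ) (k : Fin N → ℤ) :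
    C(KK B N, ℂ) where
  toFun p := f p.1.1 * (fourier k0 p.1.2 * UnitAddTorus.mFourier k p.2)
  continuous_toFun := by fun_prop

def echarSet (B : Type*) [TopologicalSpace B] (N : ℕ) : Set C(KK B N, ℂ) :=
  range fun s : C(B, ℂ) × ℤ × (Fin N → ℤ) => echar s.1 s.2.1 s.2.2

def echarAlg (B : Type*) [TopologicalSpace B] (N : ℕ) [CompactSpace B] : StarSubalgebra ℂ C(KK B N, ℂ) where
  toSubalgebra := Algebra.adjoin ℂ (echarSet B N)
  star_mem' := by
    change Algebra.adjoin ℂ (echarSet B N) ≤ star (Algebra.adjoin ℂ (echarSet B N))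
    refine Algebra.adjoin_le ?_
    rintro _ ⟨⟨f, k0, k⟩, rfl⟩
    refine Algebra.subset_adjoin ⟨⟨star f, -k0, -k⟩, ?_⟩
    ext1 x
    simp [echar, UnitAddTorus.mFourier_neg, fourier_neg]

lemma echar_dense (B : Type*) [MetricSpace B] [CompactSpace B] (N : ℕ) :
    (Submodule.span ℂ (echarSet B N)).topologicalClosure = ⊤ := by
  have h1 : (echarAlg B N).toSubalgebra.toSubmodule = Submodule.span ℂ (echarSet B N) := by
    apply Algebra.adjoin_eq_span_of_subset
    refine .trans (fun x ↦ Submonoid.closure_induction (fun _ ↦ id) ⟨⟨1, 0, 0⟩, ?_⟩ ?_)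
      Submodule.subset_span
    · ext z
      simp [echar, UnitAddTorus.mFourier_zero]
    · rintro _ _ _ _ ⟨⟨f, k0, k⟩, rfl⟩ ⟨⟨g, l0, l⟩, rfl⟩
      refine ⟨⟨f * g, k0 + l0, k + l⟩, ?_⟩
      ext z
      simp [echar, UnitAddTorus.mFourier_add, fourier_add]
      ring
  rw [← h1]
  refine congr_arg (Subalgebra.toSubmodule <| StarSubalgebra.toSubalgebra ·)
    (ContinuousMap.starSubalgebra_topologicalClosure_eq_top_of_separatesPoints (echarAlg B N) ?_)
  classical
  rintro ⟨⟨b, t⟩, y⟩ ⟨⟨b', t'⟩, y'⟩ hne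
  have hmem : ∀ f k0 k, echar f k0 k ∈ (echarAlg B N) := fun f k0 k =>
    Algebra.subset_adjoin ⟨⟨f, k0, k⟩, rfl⟩
  by_cases hb : b = b'
  · by_cases ht : t = t'
    · have hy : y ≠ y' := by rintro rfl; simp_all
      rw [Ne, funext_iff, not_forall] at hy
      obtain ⟨i, hi⟩ := hy
      refine ⟨_, ⟨echar 1 0 (Pi.single i 1), hmem _ _ _, rfl⟩, ?_⟩
      simp only [echar, ContinuousMap.coe_mk, UnitAddTorus.mFourier_single, fourier_zero,
        ContinuousMap.one_apply, one_mul]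
      rw [fourier_one, fourier_one]
      exact fun h => hi (AddCircle.injective_toCircle one_ne_zero (Circle.ext h))
    · refine ⟨_, ⟨echar 1 1 0, hmem _ _ _, rfl⟩, ?_⟩
      simp only [echar, ContinuousMap.coe_mk, UnitAddTorus.mFourier_zero,
        ContinuousMap.one_apply, one_mul, mul_one]
      rw [fourier_one, fourier_one]
      exact fun h => ht (AddCircle.injective_toCircle one_ne_zero (Circle.ext h))
  · refine ⟨_, ⟨echar ⟨fun x => (dist x b : ℂ), by fun_prop⟩ 0 0, hmem _ _ _, rfl⟩, ?_⟩
    simp [echar, UnitAddTorus.mFourier_zero]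
    intro h
    have h' := h.symm
    norm_cast at h'
    exact hb (dist_eq_zero.1 h').symm

/-- uniqueness -/
lemma echar_unique {B : Type*} [MetricSpace B] [CompactSpace B] [MeasurableSpace B] [BorelSpace B]
    {N : ℕ} (m : Measure (KK B N)) [IsFiniteMeasure m] (G : KK B N → ℂ) (hG : MemLp G 2 m)
    (h : ∀ f k0 k, ∫ p, G p * echar f k0 k p ∂m = 0) : G =ᵐ[m] 0 := by
  have hGi : Integrable G m := hG.integrable (by norm_num)
  have h1 : ∀ Ψ : C(KK B N, ℂ), ∫ p, G p * Ψ p ∂m = 0 := by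
    intro Ψ
    have := tendsto_of_dense_span (echarSet B N) (echar_dense B N)
      (fun _ => wInt m id measurable_id G hGi) 0 (∫ x, ‖G x‖ ∂m) (fun n x => wInt_bound _ _ _ _ _ _)
      (fun x => by simp; positivity) (by
        rintro _ ⟨⟨f, k0, k⟩, rfl⟩
        have : (wInt m id measurable_id G hGi) (echar f k0 k) = 0 := h f k0 k
        simp [this]) Ψ
    exact tendsto_nhds_unique tendsto_const_nhds this
  have h2 : hG.toLp G = 0 := by
    have hd := ContinuousMap.toLp_denseRange ℂ m ℂ (p := 2) (by simp)
    have h3 : ∀ Φ : Lp ℂ 2 m, inner ℂ Φ (hG.toLp G) = 0 := by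
      intro Φ
      refine hd.induction_on (p := fun Φ => inner ℂ Φ (hG.toLp G) = 0) Φ
        (isClosed_eq (by fun_prop) (by fun_prop)) ?_
      intro Ψ
      rw [L2.inner_def, ← h1 (star Ψ)]
      apply integral_congr_ae
      filter_upwards [ContinuousMap.coeFn_toLp (p := 2) (𝕜 := ℂ) m Ψ, hG.coeFn_toLp] with p hp hp2
      rw [hp, hp2]
      simp
    exact inner_self_eq_zero.1 (h3 _)
  rw [Lp.eq_zero_iff_ae_eq_zero] at h2
  exact hG.coeFn_toLp.symm.trans h2

/-- Projection to the torus. -/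
def tmk {N : ℕ} (y : Vn N) : UnitAddTorus (Fin N) := fun i => (y i : UnitAddCircle)

lemma continuous_tmk {N : ℕ} : Continuous (tmk (N := N)) := by
  unfold tmk
  exact continuous_pi fun i => (AddCircle.continuous_mk' 1).comp (continuous_apply i)

/-- The phase. -/
def phase {N : ℕ} (k0 : ℤ) (k : Fin N → ℤ) : (ℝ × Vn N) →L[ℝ] ℝ :=
  (k0 : ℝ) • ContinuousLinearMap.fst ℝ ℝ (Vn N) +
    ∑ i, (k i : ℝ) • (ContinuousLinearMap.proj i).comp (ContinuousLinearMap.snd ℝ ℝ (Vn N))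

lemma phase_apply {N : ℕ} (k0 : ℤ) (k : Fin N → ℤ) (q : ℝ × Vn N) :
    phase k0 k q = k0 * q.1 + ∑ i, k i * q.2 i := by
  simp [phase]

lemma phase_ne_zero {N : ℕ} (k0 : ℤ) (k : Fin N → ℤ) (h : ¬ (k0 = 0 ∧ k = 0)) :
    phase k0 k ≠ 0 := by
  intro h0
  apply h
  constructor
  · have := congrArg (fun f => f ((1 : ℝ), (0 : Vn N))) h0
    simpa [phase_apply] using this
  · ext i
    have := congrArg (fun f => f ((0 : ℝ), (Pi.single i 1 : Vn N))) h0
    simpa [phase_apply, Pi.single_apply] using this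

/-- the exponential -/
def ex (x : ℝ) : ℂ := Complex.exp (2 * Real.pi * Complex.I * x)

lemma fourier_ex {N : ℕ} (k0 : ℤ) (k : Fin N → ℤ) (s : ℝ) (y : Vn N) :
    fourier k0 (s : UnitAddCircle) * UnitAddTorus.mFourier k (tmk y) = ex (phase k0 k (s, y)) := by
  simp only [UnitAddTorus.mFourier, ContinuousMap.coe_mk, tmk, fourier_coe_apply, ex, phase_apply]
  rw [← Complex.exp_sum, ← Complex.exp_add]
  congr 1
  push_cast
  rw [mul_add, Finset.mul_sum]
  congr 1
  · simp; ring
  · refine Finset.sum_congr rfl fun i _ => ?_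
    simp; ring

def rho {B : Type*} {N : ℕ} (r : ℝ × Vn N → B) (e : ℝ) (q : ℝ × Vn N) : KK B N :=
  ((r q, ((q.1 / e : ℝ) : UnitAddCircle)), tmk fun i => q.2 i / e)

lemma echar_rho {B : Type*} [TopologicalSpace B] {N : ℕ} (r : ℝ × Vn N → B) (e : ℝ)
    (f : C(B, ℂ)) (k0 : ℤ) (k : Fin N → ℤ) (q : ℝ × Vn N) :
    echar f k0 k (rho r e q) = f (r q) * ex (phase k0 k q / e) := by
  simp only [echar, rho, ContinuousMap.coe_mk, fourier_ex]
  congr 2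
  simp only [phase_apply, add_div, Finset.sum_div]
  congr 1
  · ring
  · exact Finset.sum_congr rfl fun i _ => by ring

lemma continuous_rho {B : Type*} [TopologicalSpace B] {N : ℕ} (r : ℝ × Vn N → B)
    (hr : Continuous r) (e : ℝ) : Continuous (rho r e) := by
  unfold rho
  refine (hr.prodMk ?_).prodMk ?_
  · exact (AddCircle.continuous_mk' 1).comp (by fun_prop)
  · exact continuous_tmk.comp (by fun_prop)

/-- limit measure -/
def mK {B : Type*} [MeasurableSpace B] {N : ℕ} (μ : Measure (ℝ × Vn N)) (r : ℝ × Vn N → B) :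
    Measure (KK B N) := ((μ.map r).prod volume).prod volume

instance {B : Type*} [MeasurableSpace B] {N : ℕ} (μ : Measure (ℝ × Vn N)) (r : ℝ × Vn N → B)
    [IsFiniteMeasure μ] : IsFiniteMeasure (mK μ r) := by unfold mK; infer_instance

lemma integral_mFourier_zero {N : ℕ} {k : Fin N → ℤ} (hk : k ≠ 0) :
    ∫ y, UnitAddTorus.mFourier k y = 0 := by
  obtain ⟨i, hi⟩ := Function.ne_iff.1 hk
  simp only [UnitAddTorus.mFourier, ContinuousMap.coe_mk]
  have := integral_fintype_prod_volume_eq_prod (ι := Fin N) (𝕜 := ℂ) (fun i (x : UnitAddCircle) => fourier (k i) x)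
  rw [this]
  apply Finset.prod_eq_zero (Finset.mem_univ i)
  exact integral_eq_zero_of_add_right_eq_neg (fourier_add_half_inv_index hi (by norm_num))

lemma integral_fourier_zero {k : ℤ} (hk : k ≠ 0) :
    ∫ y : UnitAddCircle, fourier k y = 0 :=
  integral_eq_zero_of_add_right_eq_neg (fourier_add_half_inv_index hk (by norm_num))

lemma equidist {B : Type*} [MetricSpace B] [CompactSpace B] [MeasurableSpace B] [BorelSpace B]
    {N : ℕ} (S : Set (ℝ × Vn N)) (hS : MeasurableSet S) [IsFiniteMeasure (volume.restrict S)]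
    (r : ℝ × Vn N → B)
    (hr : Continuous r) (ε : ℕ → ℝ) (hεpos : ∀ n, 0 < ε n) (hεlim : Tendsto ε atTop (nhds 0))
    (Ψ : C(KK B N, ℂ)) :
    Tendsto (fun n => ∫ q in S, Ψ (rho r (ε n) q)) atTop
      (nhds (∫ p, Ψ p ∂(mK (volume.restrict S) r))) := by
  set μ := volume.restrict S with hμ
  have := tendsto_of_dense_span (echarSet B N) (echar_dense B N)
      (fun n => wInt μ (rho r (ε n)) (continuous_rho r hr _).measurable (fun _ => 1) (integrable_const _))
      (wInt (mK μ r) id measurable_id (fun _ => 1) (integrable_const _)) (max (μ.real univ) ((mK μ r).real univ))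
      (fun n x => (wInt_bound _ _ _ _ _ _).trans (by simp; gcongr; simp))
      (fun x => (wInt_bound _ _ _ _ _ _).trans (by simp; gcongr; simp)) (by
        rintro _ ⟨⟨f, k0, k⟩, rfl⟩
        simp only [wInt, LinearMap.coe_mk, AddHom.coe_mk, one_mul, id, echar_rho]
        have hR : ∫ p, echar f k0 k p ∂(mK μ r) = (∫ q, f (r q) ∂μ) *
            ((∫ s : UnitAddCircle, fourier k0 s) * (∫ y, UnitAddTorus.mFourier k y)) := by
          simp only [mK, echar, ContinuousMap.coe_mk, ← mul_assoc]
          have h1 := integral_prod_mul (μ := ((μ.map r).prod (volume : Measure UnitAddCircle)))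
            (ν := (volume : Measure (UnitAddTorus (Fin N))))
            (fun b : B × UnitAddCircle => f b.1 * fourier k0 b.2)
            (fun y => UnitAddTorus.mFourier k y)
          have h2 := integral_prod_mul (μ := (μ.map r)) (ν := (volume : Measure UnitAddCircle))
            (fun b => f b) (fun y => fourier k0 y)
          rw [h1, h2, integral_map hr.aemeasurable f.continuous.aestronglyMeasurable]
        rw [hR]
        by_cases hk : k0 = 0 ∧ k = 0
        · obtain ⟨rfl, rfl⟩ := hk
          simp [UnitAddTorus.mFourier_zero, phase_apply, ex]
        · have h0 : ((∫ s : UnitAddCircle, fourier k0 s) * (∫ y, UnitAddTorus.mFourier k y)) = 0 := by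
            by_cases hk0 : k0 = 0
            · rw [integral_mFourier_zero (fun h => hk ⟨hk0, h⟩), mul_zero]
            · rw [integral_fourier_zero hk0, zero_mul]
          rw [h0, mul_zero]
          have hhaar : (volume : Measure (ℝ × Vn N)).IsAddHaarMeasure :=
            inferInstanceAs (((volume : Measure ℝ).prod (volume : Measure (Vn N))).IsAddHaarMeasure)
          have hRL := tendsto_integral_exp_smul_cocompact (S.indicator fun q => f (r q))
            (volume : Measure (ℝ × Vn N))
          have hw : Tendsto (fun n => (-(1 / ε n)) • phase k0 k) atTop
              (cocompact (StrongDual ℝ (ℝ × Vn N))) := by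
            rw [← Metric.cobounded_eq_cocompact, ← tendsto_norm_atTop_iff_cobounded]
            simp only [norm_smul]
            apply Tendsto.atTop_mul_const (norm_pos_iff.2 (phase_ne_zero k0 k hk))
            have : Tendsto (fun n => (ε n)⁻¹) atTop atTop :=
              Tendsto.inv_tendsto_nhdsGT_zero (tendsto_nhdsWithin_iff.2 ⟨hεlim, Eventually.of_forall hεpos⟩)
            refine this.congr fun n => ?_
            simp [abs_of_pos (hεpos n)]
          refine (hRL.comp hw).congr fun n => ?_
          simp only [Function.comp]
          rw [hμ, ← integral_indicator hS]
          congr 1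
          ext q
          by_cases hq : q ∈ S
          · simp only [hq, indicator_of_mem, Circle.smul_def, Real.fourierChar_apply, smul_eq_mul]
            rw [mul_comm]
            congr 1
            simp only [ex]
            congr 1
            simp
            ring
          · simp [hq]) Ψ
  simpa [wInt] using this

lemma equidist_real {B : Type*} [MetricSpace B] [CompactSpace B] [MeasurableSpace B] [BorelSpace B]
    {N : ℕ} (S : Set (ℝ × Vn N)) (hS : MeasurableSet S) [IsFiniteMeasure (volume.restrict S)]
    (r : ℝ × Vn N → B)
    (hr : Continuous r) (ε : ℕ → ℝ) (hεpos : ∀ n, 0 < ε n) (hεlim : Tendsto ε atTop (nhds 0))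
    (Ψ : C(KK B N, ℝ)) :
    Tendsto (fun n => ∫ q in S, Ψ (rho r (ε n) q)) atTop
      (nhds (∫ p, Ψ p ∂(mK (volume.restrict S) r))) := by
  have := equidist S hS r hr ε hεpos hεlim ⟨fun p => (Ψ p : ℂ), by fun_prop⟩
  simp only [ContinuousMap.coe_mk, integral_complex_ofReal] at this
  exact (Complex.continuous_re.tendsto _).comp this

lemma mp_circle (a : ℝ) : MeasurePreserving (fun x : ℝ => (x : UnitAddCircle))
    (volume.restrict (Ioc a (a + 1))) volume := by
  have h := AddCircle.measurePreserving_mk 1 a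
  rw [AddCircle.volume_eq_smul_haarAddCircle] at h
  simp only [ENNReal.ofReal_one, one_smul] at h
  exact h

/-- boxes -/
def boxI {N : ℕ} (a : Vn N) : Set (Vn N) := univ.pi fun i => Ioc (a i) (a i + 1)

lemma measurableSet_boxI {N : ℕ} (a : Vn N) : MeasurableSet (boxI a) :=
  MeasurableSet.univ_pi fun _ => measurableSet_Ioc

lemma mp_tmk {N : ℕ} (a : Vn N) : MeasurePreserving (tmk (N := N))
    (volume.restrict (boxI a)) volume := by
  have h := measurePreserving_pi (fun i => (volume : Measure ℝ).restrict (Ioc (a i) (a i + 1)))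
    (fun i : Fin N => (volume : Measure UnitAddCircle)) (fun i => mp_circle (a i))
  rw [← Measure.restrict_pi_pi] at h
  exact h

lemma mp_circle_Ioo : MeasurePreserving (fun x : ℝ => (x : UnitAddCircle))
    (volume.restrict cellT) volume := by
  have h := mp_circle 0
  rw [zero_add, ← restrict_Ioo_eq_restrict_Ioc] at h
  exact h

lemma mp_tmk_cell {N : ℕ} : MeasurePreserving (tmk (N := N))
    (volume.restrict (cellY N)) volume := by
  have h := measurePreserving_pi (fun i => (volume : Measure ℝ).restrict cellT)
    (fun i : Fin N => (volume : Measure UnitAddCircle)) (fun i => mp_circle_Ioo)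
  rw [← Measure.restrict_pi_pi] at h
  exact h

/-- inverse of projection on a box -/
def tinv {N : ℕ} (a : Vn N) (x : UnitAddTorus (Fin N)) : Vn N :=
  fun i => (AddCircle.measurableEquivIoc 1 (a i) (x i)).1

lemma measurable_tinv {N : ℕ} (a : Vn N) : Measurable (tinv a) := by
  unfold tinv
  refine measurable_pi_lambda _ fun i => ?_
  exact measurable_subtype_coe.comp ((AddCircle.measurableEquivIoc 1 (a i)).measurable.comp
    (measurable_pi_apply i))

lemma tinv_tmk {N : ℕ} (a y : Vn N) (hy : y ∈ boxI a) : tinv a (tmk y) = y := by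
  ext i
  simp only [tinv, tmk]
  show (AddCircle.equivIoc 1 (a i) (y i)).1 = y i
  rw [AddCircle.equivIoc_coe_of_mem (hy i (mem_univ _))]

lemma periodize {N : ℕ} (F : Vn N → ℝ) (hF : Continuous F) (hc : HasCompactSupport F) :
    ∃ Z : UnitAddTorus (Fin N) → ℝ, MemLp Z ⊤ volume ∧
      ∀ g : UnitAddTorus (Fin N) → ℂ, Integrable g volume →
        Integrable (fun y => g (tmk y) * (F y : ℂ)) volume ∧
        ∫ y, g (tmk y) * (F y : ℂ) = ∫ x, g x * (Z x : ℂ) := by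
  obtain ⟨C, hC⟩ := hc.exists_bound_of_continuous hF
  obtain ⟨M, hM⟩ := hc.isCompact.isBounded.subset_closedBall 0
  set s : Finset (Fin N → ℤ) := Fintype.piFinset fun _ => Finset.Icc (-⌈M⌉ - 1) ⌈M⌉ with hs
  set bx : (Fin N → ℤ) → Set (Vn N) := fun l => boxI fun i => (l i : ℝ) with hbx
  have hdisj : ∀ l l', l ≠ l' → Disjoint (bx l) (bx l') := by
    intro l l' hl
    rw [Set.disjoint_left]
    intro y h1 h2
    apply hl
    ext i
    have a1 := h1 i (mem_univ _)
    have a2 := h2 i (mem_univ _)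
    simp only [mem_Ioc] at a1 a2
    have b1 : (l i : ℝ) < l' i + 1 := by linarith
    have b2 : (l' i : ℝ) < l i + 1 := by linarith
    norm_cast at b1 b2
    omega
  have hcov : ∀ y, y ∉ ⋃ l ∈ s, bx l → F y = 0 := by
    intro y hy
    by_contra hne
    apply hy
    have hy1 : y ∈ Metric.closedBall (0 : Vn N) M := hM (subset_tsupport _ hne)
    rw [mem_closedBall_zero_iff] at hy1
    simp only [mem_iUnion]
    refine ⟨fun i => ⌈y i⌉ - 1, ?_, ?_⟩
    · rw [hs, Fintype.mem_piFinset]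
      intro i
      have h2 : |y i| ≤ M := (norm_le_pi_norm y i).trans hy1
      rw [abs_le] at h2
      have h3 : ⌈y i⌉ ≤ ⌈M⌉ := Int.ceil_le_ceil h2.2
      have h4 : -⌈M⌉ ≤ ⌈y i⌉ := by
        have : -(⌈M⌉ : ℝ) ≤ ⌈y i⌉ := by linarith [Int.le_ceil M, Int.le_ceil (y i)]
        exact_mod_cast this
      simp only [Finset.mem_Icc]
      omega
    · intro i _
      simp only [mem_Ioc]
      push_cast
      constructor
      · linarith [Int.ceil_lt_add_one (y i)]
      · linarith [Int.le_ceil (y i)]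
  have hZm : ∀ l : Fin N → ℤ, MemLp (fun x => F (tinv (fun i => (l i : ℝ)) x)) ⊤ volume := fun l =>
    memLp_top_of_bound (hF.measurable.comp (measurable_tinv _)).aestronglyMeasurable C
      (Eventually.of_forall fun x => hC _)
  refine ⟨fun x => ∑ l ∈ s, F (tinv (fun i => (l i : ℝ)) x), ?_, ?_⟩
  · exact memLp_finsetSum s fun l _ => hZm l
  intro g hg
  have hcell : ∀ l, IntegrableOn (fun y => g (tmk y) * (F y : ℂ)) (bx l) volume ∧
      ∫ y in bx l, g (tmk y) * (F y : ℂ) = ∫ x, g x * (F (tinv (fun i => (l i : ℝ)) x) : ℂ) ∧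
      Integrable (fun x => g x * (F (tinv (fun i => (l i : ℝ)) x) : ℂ)) volume := by
    intro l
    have hi : Integrable (fun x => g x * (F (tinv (fun i => (l i : ℝ)) x) : ℂ)) volume := by
      refine hg.mul_bdd (c := C) ?_ ?_
      · exact (Complex.measurable_ofReal.comp
          (hF.measurable.comp (measurable_tinv _))).aestronglyMeasurable
      · exact Eventually.of_forall fun x => by simpa using hC _
    have hmp := mp_tmk (fun i => (l i : ℝ))
    have heq : (fun y => g (tmk y) * (F y : ℂ)) =ᵐ[volume.restrict (bx l)]
        fun y => (fun x => g x * (F (tinv (fun i => (l i : ℝ)) x) : ℂ)) (tmk y) := by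
      filter_upwards [ae_restrict_mem (measurableSet_boxI _)] with y hy
      simp only [tinv_tmk _ y hy]
    refine ⟨?_, ?_, hi⟩
    · exact (hmp.integrable_comp_of_integrable hi).congr heq.symm
    · rw [integral_congr_ae heq, ← hmp.map_eq, integral_map hmp.measurable.aemeasurable]
      rw [hmp.map_eq]
      exact hi.aestronglyMeasurable
  have hInt : IntegrableOn (fun y => g (tmk y) * (F y : ℂ)) (⋃ l ∈ s, bx l) volume := by
    rw [integrableOn_finset_iUnion]
    exact fun l _ => (hcell l).1
  have hzero : ∀ y, y ∉ ⋃ l ∈ s, bx l → g (tmk y) * (F y : ℂ) = 0 := by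
    intro y hy; simp [hcov y hy]
  constructor
  · rwa [integrableOn_iff_integrable_of_support_subset] at hInt
    intro y hy
    by_contra h
    exact hy (hzero y h)
  · rw [← setIntegral_eq_integral_of_forall_compl_eq_zero hzero,
      integral_biUnion_finset s (fun l _ => measurableSet_boxI _)
        (fun l _ l' _ h => hdisj l l' h) (fun l _ => (hcell l).1)]
    push_cast
    simp_rw [Finset.mul_sum]
    rw [integral_finsetSum _ fun l _ => (hcell l).2.2]
    exact Finset.sum_congr rfl fun l _ => (hcell l).2.1

lemma hasFDerivAt_ex (x : ℝ) : HasDerivAt ex (2 * Real.pi * Complex.I * ex x) x := by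
  unfold ex
  have h1 : HasDerivAt (fun x : ℝ => 2 * Real.pi * Complex.I * (x : ℂ)) (2 * Real.pi * Complex.I) x := by
    simpa using (Complex.ofRealCLM.hasDerivAt (x := x)).const_mul (2 * Real.pi * Complex.I)
  simpa [mul_comm] using h1.cexp

lemma contDiff_ex : ContDiff ℝ (⊤ : ℕ∞) ex := by
  unfold ex
  exact (contDiff_const.mul Complex.ofRealCLM.contDiff).cexp

lemma norm_ex (x : ℝ) : ‖ex x‖ = 1 := by
  unfold ex
  rw [Complex.norm_exp]
  simp

lemma mFourier_tmk {N : ℕ} (k : Fin N → ℤ) (y : Vn N) :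
    UnitAddTorus.mFourier k (tmk y) = ex (phase 0 k (0, y)) := by
  have := fourier_ex 0 k 0 y
  simpa using this

lemma parseval_re {N : ℕ} (Z : UnitAddTorus (Fin N) → ℝ) (hZ : MemLp Z ⊤ volume)
    (g : UnitAddTorus (Fin N) → ℂ) (hg : MemLp g 2 volume) :
    HasSum (fun k => (starRingEnd ℂ) (UnitAddTorus.mFourierCoeff (fun x => (Z x : ℂ)) k) *
      UnitAddTorus.mFourierCoeff g k) (∫ x, g x * (Z x : ℂ)) := by
  have hZ2 : MemLp (fun x => (Z x : ℂ)) 2 volume := (hZ.mono_exponent le_top).ofReal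
  have h := UnitAddTorus.hasSum_prod_mFourierCoeff (hZ2.toLp _) (hg.toLp _)
  have e1 : ∀ (f : UnitAddTorus (Fin N) → ℂ) (hf : MemLp f 2 volume) k,
      UnitAddTorus.mFourierCoeff (hf.toLp f) k = UnitAddTorus.mFourierCoeff f k := by
    intro f hf k
    unfold UnitAddTorus.mFourierCoeff
    apply integral_congr_ae
    filter_upwards [hf.coeFn_toLp] with x hx
    rw [hx]
  simp only [e1] at h
  convert h using 1
  apply integral_congr_ae
  filter_upwards [hZ2.coeFn_toLp, hg.coeFn_toLp] with x h1 h2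
  rw [h1, h2, Complex.conj_ofReal, mul_comm]

lemma lemE {N : ℕ} (j : Fin N) (g h : UnitAddTorus (Fin N) → ℂ) (hg : MemLp g 2 volume)
    (hh : MemLp h 2 volume)
    (hk : ∀ k, 2 * Real.pi * Complex.I * (k j) * UnitAddTorus.mFourierCoeff g k =
      UnitAddTorus.mFourierCoeff h k) (ζ : Vn N → ℝ) (hζ : ContDiff ℝ (⊤ : ℕ∞) ζ)
    (hc : HasCompactSupport ζ) :
    Integrable (fun y => g (tmk y) * (pdN ζ j y : ℂ)) ∧ Integrable (fun y => h (tmk y) * (ζ y : ℂ)) ∧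
    ∫ y, g (tmk y) * (pdN ζ j y : ℂ) = - ∫ y, h (tmk y) * (ζ y : ℂ) := by
  have hζ1 : ContDiff ℝ 1 ζ := hζ.of_le (by exact_mod_cast le_top)
  have hd : Continuous (pdN ζ j) := (hζ1.continuous_fderiv (by norm_num)).clm_apply continuous_const
  have hdc : HasCompactSupport (pdN ζ j) :=
    (hc.fderiv (𝕜 := ℝ)).comp_left (g := fun L : Vn N →L[ℝ] ℝ => L (Pi.single j 1)) (by simp)
  obtain ⟨Z, hZ, hZg⟩ := periodize ζ hζ.continuous hc
  obtain ⟨Z', hZ', hZg'⟩ := periodize (pdN ζ j) hd hdc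
  have hco : ∀ k, UnitAddTorus.mFourierCoeff (fun x => (Z' x : ℂ)) k =
      2 * Real.pi * Complex.I * (k j) * UnitAddTorus.mFourierCoeff (fun x => (Z x : ℂ)) k := by
    intro k
    have hi : Integrable (UnitAddTorus.mFourier (-k)) (volume : Measure (UnitAddTorus (Fin N))) :=
      (ContinuousMap.continuous _).integrable_of_hasCompactSupport (HasCompactSupport.of_compactSpace _)
    unfold UnitAddTorus.mFourierCoeff
    simp only [smul_eq_mul]
    rw [← (hZg' _ hi).2, ← (hZg _ hi).2]
    have hder : ∀ y, HasFDerivAt (fun y : Vn N => UnitAddTorus.mFourier (-k) (tmk y))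
        (((phase 0 (-k)).comp (ContinuousLinearMap.inr ℝ ℝ (Vn N))).smulRight
          (2 * Real.pi * Complex.I * UnitAddTorus.mFourier (-k) (tmk y))) y := by
      intro y
      simp only [mFourier_tmk]
      have h1 := ((phase 0 (-k)).comp (ContinuousLinearMap.inr ℝ ℝ (Vn N))).hasFDerivAt (x := y)
      have := (hasFDerivAt_ex (((phase 0 (-k)).comp (ContinuousLinearMap.inr ℝ ℝ (Vn N))) y)).hasFDerivAt.comp y h1
      refine this.congr_fderiv ?_
      ext v
      simp
    have hζd : ∀ y, HasFDerivAt (fun y => (ζ y : ℂ)) (Complex.ofRealCLM.comp (fderiv ℝ ζ y)) y := fun y =>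
      Complex.ofRealCLM.hasFDerivAt.comp y (hζ1.differentiable (by norm_num) y).hasFDerivAt
    have hfd : ∀ y, fderiv ℝ (fun y => (ζ y : ℂ)) y (Pi.single j 1) = (pdN ζ j y : ℂ) := by
      intro y
      rw [(hζd y).fderiv]; rfl
    have hfe : ∀ y, fderiv ℝ (fun y : Vn N => UnitAddTorus.mFourier (-k) (tmk y)) y (Pi.single j 1) =
        - (2 * Real.pi * Complex.I * (k j)) * UnitAddTorus.mFourier (-k) (tmk y) := by
      intro y
      rw [(hder y).fderiv]
      simp [phase_apply, Pi.single_apply]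
      ring
    have hibp := integral_mul_fderiv_eq_neg_fderiv_mul_of_integrable (μ := (volume : Measure (Vn N)))
      (f := fun y : Vn N => UnitAddTorus.mFourier (-k) (tmk y)) (g := fun y => (ζ y : ℂ))
      (v := Pi.single j 1) ?_ ?_ ?_ (fun y _ => (hder y).differentiableAt)
      (fun y _ => (hζd y).differentiableAt)
    · simp only [hfd, hfe] at hibp
      rw [hibp]
      rw [← integral_neg, ← integral_const_mul]
      congr 1; ext y; ring
    · simp only [hfe, mul_assoc]
      exact ((hZg _ hi).1.const_mul _)
    · simp only [hfd]
      exact (hZg' _ hi).1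
    · exact (hZg _ hi).1
  have hgi := hg.integrable (by norm_num)
  have hhi := hh.integrable (by norm_num)
  refine ⟨(hZg' _ hgi).1, (hZg _ hhi).1, ?_⟩
  rw [(hZg' _ hgi).2, (hZg _ hhi).2]
  have s1 := parseval_re Z' hZ' g hg
  have s2 := (parseval_re Z hZ h hh).neg
  refine HasSum.unique (f := fun b => -((starRingEnd ℂ) (UnitAddTorus.mFourierCoeff (fun x => (Z x : ℂ)) b) * UnitAddTorus.mFourierCoeff h b)) ?_ s2
  have hfe : (fun k => (starRingEnd ℂ) (UnitAddTorus.mFourierCoeff (fun x => (Z' x : ℂ)) k) *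
      UnitAddTorus.mFourierCoeff g k) = fun b => -((starRingEnd ℂ)
      (UnitAddTorus.mFourierCoeff (fun x => (Z x : ℂ)) b) * UnitAddTorus.mFourierCoeff h b) := by
    funext k
    rw [hco k, ← hk k]
    simp only [map_mul, Complex.conj_ofReal, Complex.conj_I, map_ofNat, map_intCast]
    ring
  rw [hfe] at s1
  exact s1

lemma int_mFourier_mul {N : ℕ} (k l : Fin N → ℤ) :
    ∫ y, (starRingEnd ℂ) (UnitAddTorus.mFourier k y) * UnitAddTorus.mFourier l y =
      if k = l then 1 else 0 := by
  simp_rw [← UnitAddTorus.mFourier_neg, ← UnitAddTorus.mFourier_add]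
  split_ifs with h
  · subst h
    simp [UnitAddTorus.mFourier_zero]
  · apply integral_mFourier_zero
    intro h2
    apply h
    have : l = k := by
      have := add_eq_zero_iff_eq_neg.1 h2
      simpa using this.symm
    exact this.symm

lemma norm_mFourier_apply {N : ℕ} (k : Fin N → ℤ) (y : UnitAddTorus (Fin N)) :
    ‖UnitAddTorus.mFourier k y‖ = 1 := by
  simp only [UnitAddTorus.mFourier, ContinuousMap.coe_mk, norm_prod]
  exact Finset.prod_eq_one fun i _ => Circle.norm_coe _

lemma memLp_fiber {Ω Y E : Type*} [MeasurableSpace Ω] [MeasurableSpace Y] [NormedAddCommGroup E]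
    (m₁ : Measure Ω) [SFinite m₁] (ν : Measure Y) [SFinite ν]
    (f : Ω × Y → E) (hf : StronglyMeasurable f) (h : MemLp f 2 (m₁.prod ν)) :
    ∀ᵐ ω ∂m₁, MemLp (fun y => f (ω, y)) 2 ν := by
  have h1 := (memLp_two_iff_integrable_sq_norm h.aestronglyMeasurable).1 h
  filter_upwards [h1.prod_right_ae] with ω hω
  exact (memLp_two_iff_integrable_sq_norm
    (hf.comp_measurable measurable_prodMk_left).aestronglyMeasurable).2 hω

lemma synth {Ω : Type*} [MeasurableSpace Ω] (m₁ : Measure Ω) [IsFiniteMeasure m₁] {N : ℕ}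
    (c : (Fin N → ℤ) → Ω → ℂ) (hc : ∀ k, StronglyMeasurable (c k)) (B : Ω → ℝ)
    (hB : Integrable B m₁) (hcB : ∀ᵐ ω ∂m₁, ∀ F : Finset (Fin N → ℤ), ∑ k ∈ F, ‖c k ω‖ ^ 2 ≤ B ω) :
    ∃ U : Ω × UnitAddTorus (Fin N) → ℂ, StronglyMeasurable U ∧ MemLp U 2 (m₁.prod volume) ∧
      ∀ k, ∀ᵐ ω ∂m₁, UnitAddTorus.mFourierCoeff (fun y => U (ω, y)) k = c k ω := by
  set m := m₁.prod (volume : Measure (UnitAddTorus (Fin N))) with hm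
  -- product functions
  have hcm : ∀ k, MemLp (c k) 2 m₁ := by
    intro k
    rw [memLp_two_iff_integrable_sq_norm (hc k).aestronglyMeasurable]
    refine hB.mono' ((hc k).norm.pow 2).aestronglyMeasurable ?_
    filter_upwards [hcB] with ω h
    have := h {k}
    simpa using this
  have htm : ∀ (a : Ω → ℂ) (_ : MemLp a 2 m₁) (k : Fin N → ℤ),
      MemLp (fun p : Ω × UnitAddTorus (Fin N) => a p.1 * UnitAddTorus.mFourier k p.2) 2 m := by
    intro a ha k
    refine (ha.comp_fst (volume : Measure (UnitAddTorus (Fin N)))).of_le ?_ ?_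
    · exact ((ha.comp_fst (volume : Measure (UnitAddTorus (Fin N)))).aestronglyMeasurable).mul
        ((UnitAddTorus.mFourier k).continuous.comp continuous_id |>.stronglyMeasurable.comp_measurable
          measurable_snd).aestronglyMeasurable
    · refine Eventually.of_forall fun p => ?_
      simp [norm_mFourier_apply]
  have hinner : ∀ (a b : Ω → ℂ) (ha : MemLp a 2 m₁) (hb : MemLp b 2 m₁) (k l : Fin N → ℤ),
      inner ℂ ((htm a ha k).toLp _) ((htm b hb l).toLp _) =
        (∫ ω, (starRingEnd ℂ) (a ω) * b ω ∂m₁) * if k = l then 1 else 0 := by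
    intro a b ha hb k l
    rw [L2.inner_def, ← int_mFourier_mul, ← integral_prod_mul]
    apply integral_congr_ae
    filter_upwards [(htm a ha k).coeFn_toLp, (htm b hb l).coeFn_toLp] with p h1 h2
    rw [h1, h2]
    simp
    ring
  set w : (Fin N → ℤ) → Lp ℂ 2 m := fun k => (htm (c k) (hcm k) k).toLp _ with hw
  have hwn : ∀ k, ‖w k‖ ^ 2 = ∫ ω, ‖c k ω‖ ^ 2 ∂m₁ := by
    intro k
    have h1 := inner_self_eq_norm_sq_to_K (𝕜 := ℂ) (w k)
    rw [hw] at h1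
    simp only at h1
    rw [hinner _ _ (hcm k) (hcm k)] at h1
    simp only [if_true, mul_one, Complex.conj_mul'] at h1
    norm_cast at h1
    exact (Complex.ofReal_injective h1).symm
  have hws : Summable fun k => ‖w k‖ ^ 2 := by
    refine summable_of_sum_le (c := ∫ ω, B ω ∂m₁) (fun k => by positivity) fun F => ?_
    simp only [hwn]
    rw [← integral_finsetSum]
    · refine integral_mono_ae (integrable_finsetSum _ fun k _ =>
        (memLp_two_iff_integrable_sq_norm (hc k).aestronglyMeasurable).1 (hcm k)) hB ?_
      filter_upwards [hcB] with ω h using h F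
    · exact fun k _ => (memLp_two_iff_integrable_sq_norm (hc k).aestronglyMeasurable).1 (hcm k)
  have hsum : Summable w := by
    have hof := OrthogonalFamily.of_pairwise (𝕜 := ℂ) (V := fun k => Submodule.span ℂ {w k}) (by
      intro k l hkl
      simp only [Function.onFun]
      rw [Submodule.isOrtho_span]
      rintro _ rfl _ rfl
      rw [hw]
      simp only
      rw [hinner _ _ (hcm k) (hcm l), if_neg hkl, mul_zero])
    exact (hof.summable_iff_norm_sq_summable
      (fun k => ⟨w k, Submodule.mem_span_singleton_self _⟩)).2 hws
  obtain ⟨W, hW⟩ := hsum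
  refine ⟨W, Lp.stronglyMeasurable W, Lp.memLp W, fun k => ?_⟩
  have hWi : Integrable (fun p : Ω × UnitAddTorus (Fin N) =>
      UnitAddTorus.mFourier (-k) p.2 * W p) m := by
    refine ((Lp.memLp W).integrable (by norm_num)).bdd_mul (c := 1) ?_ ?_
    · exact ((UnitAddTorus.mFourier (-k)).continuous.stronglyMeasurable.comp_measurable
          measurable_snd).aestronglyMeasurable
    · exact Eventually.of_forall fun p => (norm_mFourier_apply _ _).le
  refine Integrable.ae_eq_of_forall_setIntegral_eq _ _ hWi.integral_prod_left
    ((hcm k).integrable (by norm_num)) ?_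
  intro s hs _
  set a : Ω → ℂ := s.indicator fun _ => 1 with ha'
  have ha : MemLp a 2 m₁ := (memLp_const 1).indicator hs
  have h1 : HasSum (fun l => inner ℂ ((htm a ha k).toLp _) (w l)) (inner ℂ ((htm a ha k).toLp _) W) :=
    hW.mapL (innerSL ℂ ((htm a ha k).toLp _))
  have h2 : HasSum (fun l => inner ℂ ((htm a ha k).toLp _) (w l)) (∫ ω in s, c k ω ∂m₁) := by
    have : (fun l => inner ℂ ((htm a ha k).toLp _) (w l)) =
        fun l => if l = k then (∫ ω in s, c k ω ∂m₁) else 0 := by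
      ext l
      rw [hw]
      simp only
      rw [hinner _ _ ha (hcm l)]
      by_cases hkl : k = l
      · subst hkl
        simp only [if_true, mul_one]
        rw [← integral_indicator hs]
        congr 1
        ext ω
        by_cases hω : ω ∈ s <;> simp [ha', hω]
      · rw [if_neg hkl, if_neg (Ne.symm hkl), mul_zero]
    rw [this]
    exact hasSum_ite_eq k _
  have h3 := h1.unique h2
  rw [← h3, L2.inner_def]
  have h4 : ∫ p, inner ℂ (((htm a ha k).toLp _ : Lp ℂ 2 m) p) (W p) ∂m =
      ∫ p, (s ×ˢ (univ : Set (UnitAddTorus (Fin N)))).indicator (fun p => UnitAddTorus.mFourier (-k) p.2 * W p) p ∂m := by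
    apply integral_congr_ae
    filter_upwards [(htm a ha k).coeFn_toLp] with p h1
    rw [h1]
    by_cases hω : p.1 ∈ s
    · simp [ha', hω, UnitAddTorus.mFourier_neg, mul_comm]
    · simp [ha', hω]
  rw [h4, integral_indicator (hs.prod MeasurableSet.univ)]
  have h5 : m.restrict (s ×ˢ (univ : Set (UnitAddTorus (Fin N)))) =
      (m₁.restrict s).prod volume := by
    rw [hm, ← Measure.prod_restrict, Measure.restrict_univ]
  have hWi2 := hWi.integrableOn (s := s ×ˢ (univ : Set (UnitAddTorus (Fin N))))
  unfold IntegrableOn at hWi2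
  rw [h5] at hWi2 ⊢
  rw [integral_prod _ hWi2]
  rfl

lemma coeff_toLp {N : ℕ} (f : UnitAddTorus (Fin N) → ℂ) (hf : MemLp f 2 volume) (k : Fin N → ℤ) :
    UnitAddTorus.mFourierCoeff (hf.toLp f) k = UnitAddTorus.mFourierCoeff f k := by
  unfold UnitAddTorus.mFourierCoeff
  apply integral_congr_ae
  filter_upwards [hf.coeFn_toLp] with x hx
  rw [hx]

lemma bessel {N : ℕ} (g : UnitAddTorus (Fin N) → ℝ) (hg : MemLp g 2 volume)
    (F : Finset (Fin N → ℤ)) :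
    ∑ k ∈ F, ‖UnitAddTorus.mFourierCoeff (fun x => (g x : ℂ)) k‖ ^ 2 ≤ ∫ x, g x ^ 2 := by
  have hg2 : MemLp (fun x => (g x : ℂ)) 2 volume := hg.ofReal
  have h := UnitAddTorus.hasSum_sq_mFourierCoeff (hg2.toLp _)
  simp only [coeff_toLp] at h
  have h2 := sum_le_hasSum F (fun k _ => by positivity) h
  refine h2.trans (le_of_eq ?_)
  apply integral_congr_ae
  filter_upwards [hg2.coeFn_toLp] with x hx
  rw [hx]
  simp

lemma lemC {Ω : Type*} [MeasurableSpace Ω] (m₁ : Measure Ω) [IsFiniteMeasure m₁] {N : ℕ}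
    (V : Fin N → Ω × UnitAddTorus (Fin N) → ℝ) (hVm : ∀ j, StronglyMeasurable (V j))
    (hV : ∀ j, MemLp (V j) 2 (m₁.prod volume))
    (hcurl : ∀ k : Fin N → ℤ, ∀ i j, ∀ᵐ ω ∂m₁,
      (k i : ℂ) * UnitAddTorus.mFourierCoeff (fun y => (V j (ω, y) : ℂ)) k =
      (k j : ℂ) * UnitAddTorus.mFourierCoeff (fun y => (V i (ω, y) : ℂ)) k) :
    ∃ (u : Ω × UnitAddTorus (Fin N) → ℝ) (D : Fin N → Ω × UnitAddTorus (Fin N) → ℝ),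
      StronglyMeasurable u ∧ MemLp u 2 (m₁.prod volume) ∧
      (∀ j, StronglyMeasurable (D j) ∧ MemLp (D j) 2 (m₁.prod volume)) ∧
      (∀ ω, ∫ y, u (ω, y) = 0) ∧
      (∀ ω j, ∀ ζ : Vn N → ℝ, ContDiff ℝ (⊤ : ℕ∞) ζ → HasCompactSupport ζ →
        ∫ y, u (ω, tmk y) * pdN ζ j y = - ∫ y, D j (ω, tmk y) * ζ y) ∧
      (∀ j, D j =ᵐ[m₁.prod volume] fun p => V j p - ∫ y, V j (p.1, y)) := by
  set c : Fin N → (Fin N → ℤ) → Ω → ℂ := fun j k ω =>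
    UnitAddTorus.mFourierCoeff (fun y => (V j (ω, y) : ℂ)) k with hc
  have hVfib : ∀ j, ∀ᵐ ω ∂m₁, MemLp (fun y => V j (ω, y)) 2 volume := fun j =>
    memLp_fiber m₁ volume (V j) (hVm j) (hV j)
  have hcm : ∀ j k, StronglyMeasurable (c j k) := by
    intro j k
    simp only [hc]
    unfold UnitAddTorus.mFourierCoeff
    have h1 : StronglyMeasurable fun p : Ω × UnitAddTorus (Fin N) => UnitAddTorus.mFourier (-k) p.2 :=
      (UnitAddTorus.mFourier (-k)).continuous.stronglyMeasurable.comp_measurable measurable_snd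
    have h2 : StronglyMeasurable fun p : Ω × UnitAddTorus (Fin N) => (V j p : ℂ) :=
      Complex.continuous_ofReal.comp_stronglyMeasurable (hVm j)
    exact StronglyMeasurable.integral_prod_right
      (f := fun ω y => UnitAddTorus.mFourier (-k) y • (V j (ω, y) : ℂ)) (h1.smul h2)
  set kk : (Fin N → ℤ) → ℝ := fun k => ∑ i, (k i : ℝ) ^ 2 with hkk
  set d : (Fin N → ℤ) → Ω → ℂ := fun k ω =>
    (∑ i, (k i : ℂ) * c i k ω) / (2 * Real.pi * Complex.I * (kk k : ℂ)) with hd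
  have hdm : ∀ k, StronglyMeasurable (d k) := by
    intro k
    refine StronglyMeasurable.div ?_ stronglyMeasurable_const
    exact Finset.stronglyMeasurable_fun_sum _ fun i _ => stronglyMeasurable_const.mul (hcm i k)
  have hkk1 : ∀ k j, |(k j : ℝ)| ≤ kk k := by
    intro k j
    have h1 : |(k j : ℝ)| ≤ (k j : ℝ) ^ 2 := by
      rw [← sq_abs]
      have : |k j| ≤ |k j| ^ 2 := by
        rcases eq_or_ne (k j) 0 with h | h
        · simp [h]
        · have := Int.one_le_abs h
          nlinarith
      exact_mod_cast this
    exact h1.trans (Finset.single_le_sum (f := fun i => (k i : ℝ) ^ 2) (fun i _ => sq_nonneg _)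
      (Finset.mem_univ j))
  have hkk0 : ∀ k, 0 ≤ kk k := fun k => Finset.sum_nonneg fun i _ => sq_nonneg _
  have hdb : ∀ k ω, ‖d k ω‖ ^ 2 ≤ N * ∑ i, ‖c i k ω‖ ^ 2 := by
    intro k ω
    have h1 : ‖d k ω‖ ≤ ∑ i, ‖c i k ω‖ := by
      simp only [hd, norm_div, norm_mul, Complex.norm_ofNat, Complex.norm_real, Complex.norm_I,
        Real.norm_eq_abs, abs_of_pos Real.pi_pos, abs_of_nonneg (hkk0 k), mul_one]
      rcases eq_or_lt_of_le (hkk0 k) with h | h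
      · rw [← h]; simp
        exact Finset.sum_nonneg fun i _ => norm_nonneg _
      · rw [div_le_iff₀ (by positivity)]
        calc ‖∑ i, (k i : ℂ) * c i k ω‖ ≤ ∑ i, kk k * ‖c i k ω‖ := by
              refine (norm_sum_le _ _).trans (Finset.sum_le_sum fun i _ => ?_)
              rw [norm_mul]
              gcongr
              have := hkk1 k i
              simpa using this
          _ = kk k * ∑ i, ‖c i k ω‖ := by rw [Finset.mul_sum]
          _ ≤ (∑ i, ‖c i k ω‖) * (2 * Real.pi * kk k) := by
              have h2 : 0 ≤ ∑ i, ‖c i k ω‖ := Finset.sum_nonneg fun i _ => norm_nonneg _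
              have h3 := Real.pi_gt_three
              nlinarith [mul_nonneg h2 h.le]
    calc ‖d k ω‖ ^ 2 ≤ (∑ i, ‖c i k ω‖) ^ 2 := by gcongr
      _ ≤ _ := by
        have := sq_sum_le_card_mul_sum_sq (s := Finset.univ) (f := fun i => ‖c i k ω‖)
        simpa using this
  have hVsq : ∀ j, Integrable (fun p => V j p ^ 2) (m₁.prod volume) := fun j => (hV j).integrable_sq
  obtain ⟨U, hUm, hU, hUc⟩ := synth m₁ d hdm (fun ω => N * ∑ j, ∫ y, V j (ω, y) ^ 2)
    ((integrable_finsetSum _ fun j _ => (hVsq j).integral_prod_left).const_mul _) (by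
      filter_upwards [ae_all_iff.2 hVfib] with ω hω
      intro F
      calc ∑ k ∈ F, ‖d k ω‖ ^ 2 ≤ ∑ k ∈ F, N * ∑ i, ‖c i k ω‖ ^ 2 := Finset.sum_le_sum fun k _ => hdb k ω
        _ = N * ∑ i, ∑ k ∈ F, ‖c i k ω‖ ^ 2 := by rw [← Finset.mul_sum, Finset.sum_comm]
        _ ≤ _ := by
          gcongr with i
          exact bessel _ (hω i) F)
  have hgood : ∀ᵐ ω ∂m₁, (∀ k, UnitAddTorus.mFourierCoeff (fun y => U (ω, y)) k = d k ω) ∧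
      (∀ k i j, (k i : ℂ) * c j k ω = (k j : ℂ) * c i k ω) ∧
      (∀ j, MemLp (fun y => V j (ω, y)) 2 volume) ∧ MemLp (fun y => U (ω, y)) 2 volume := by
    filter_upwards [ae_all_iff.2 hUc, ae_all_iff.2 fun k => ae_all_iff.2 fun i =>
      ae_all_iff.2 fun j => hcurl k i j, ae_all_iff.2 hVfib, memLp_fiber m₁ volume U hUm hU]
      with ω h1 h2 h3 h4
    exact ⟨h1, h2, h3, h4⟩
  set S : Set Ω := (toMeasurable m₁ {ω | ¬ ((∀ k, UnitAddTorus.mFourierCoeff (fun y => U (ω, y)) k = d k ω) ∧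
      (∀ k i j, (k i : ℂ) * c j k ω = (k j : ℂ) * c i k ω) ∧
      (∀ j, MemLp (fun y => V j (ω, y)) 2 volume) ∧ MemLp (fun y => U (ω, y)) 2 volume)})ᶜ with hS
  have hSm : MeasurableSet S := (measurableSet_toMeasurable _ _).compl
  have hSae : ∀ᵐ ω ∂m₁, ω ∈ S := by
    rw [ae_iff]
    simp only [hS, mem_compl_iff, not_not, ofPred_mem_eq]
    rw [measure_toMeasurable]
    exact hgood
  have hSg : ∀ ω ∈ S, (∀ k, UnitAddTorus.mFourierCoeff (fun y => U (ω, y)) k = d k ω) ∧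
      (∀ k i j, (k i : ℂ) * c j k ω = (k j : ℂ) * c i k ω) ∧
      (∀ j, MemLp (fun y => V j (ω, y)) 2 volume) ∧ MemLp (fun y => U (ω, y)) 2 volume := by
    intro ω hω
    by_contra h
    exact hω (subset_toMeasurable _ _ h)
  have hSp : MeasurableSet (S ×ˢ (univ : Set (UnitAddTorus (Fin N)))) := hSm.prod MeasurableSet.univ
  have hMm : ∀ j, StronglyMeasurable fun p : Ω × UnitAddTorus (Fin N) => V j p - ∫ y, V j (p.1, y) := by
    intro j
    refine (hVm j).sub ?_
    exact (StronglyMeasurable.integral_prod_right (f := fun ω y => V j (ω, y)) (hVm j)).comp_measurable measurable_fst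
  have hMl : ∀ j, MemLp (fun p : Ω × UnitAddTorus (Fin N) => V j p - ∫ y, V j (p.1, y)) 2 (m₁.prod volume) := by
    intro j
    refine (hV j).sub ?_
    refine MemLp.comp_fst (f := fun ω => ∫ y, V j (ω, y)) ?_ (volume : Measure (UnitAddTorus (Fin N)))
    have hm1 : StronglyMeasurable (fun ω => ∫ y, V j (ω, y)) :=
      StronglyMeasurable.integral_prod_right (f := fun ω y => V j (ω, y)) (hVm j)
    rw [memLp_two_iff_integrable_sq hm1.aestronglyMeasurable]
    refine (hVsq j).integral_prod_left.mono' (hm1.pow 2).aestronglyMeasurable ?_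
    filter_upwards [hVfib j] with ω hω
    have := bessel _ hω {0}
    simp only [Finset.sum_singleton, UnitAddTorus.mFourierCoeff, neg_zero, UnitAddTorus.mFourier_zero,
      ContinuousMap.one_apply, one_smul, integral_complex_ofReal, Complex.norm_real] at this
    rw [norm_pow]
    exact this
  refine ⟨(S ×ˢ univ).indicator fun p => (U p).re, fun j => (S ×ˢ univ).indicator
    fun p => V j p - ∫ y, V j (p.1, y), ?_, ?_, fun j => ⟨?_, ?_⟩, ?_, ?_, ?_⟩
  · exact (Complex.continuous_re.comp_stronglyMeasurable hUm).indicator hSp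
  · exact hU.re.indicator hSp
  · exact (hMm j).indicator hSp
  · exact (hMl j).indicator hSp
  · intro ω
    by_cases hω : ω ∈ S
    · obtain ⟨h1, -, -, h4⟩ := hSg ω hω
      simp only [indicator, mem_prod, hω, mem_univ, and_self, if_true]
      have h0 := h1 0
      simp only [UnitAddTorus.mFourierCoeff, neg_zero, UnitAddTorus.mFourier_zero,
        ContinuousMap.one_apply, one_smul] at h0
      have h5 : ∫ y, (U (ω, y)).re = (∫ y, U (ω, y)).re := integral_re (h4.integrable (by norm_num))
      rw [h5, h0]
      simp [hd]
    · simp [indicator, hω]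
  · intro ω j ζ hζ hζc
    by_cases hω : ω ∈ S
    · obtain ⟨h1, h2, h3, h4⟩ := hSg ω hω
      simp only [indicator, mem_prod, hω, mem_univ, and_self, if_true]
      have hVc : MemLp (fun y => ((V j (ω, y) - ∫ y, V j (ω, y) : ℝ) : ℂ)) 2 volume :=
        ((h3 j).sub (memLp_const (∫ y, V j (ω, y)))).ofReal
      have hE := lemE j (fun y => U (ω, y)) (fun y => ((V j (ω, y) - ∫ y, V j (ω, y) : ℝ) : ℂ)) h4 hVc ?_ ζ hζ hζc
      · obtain ⟨e1, e2, e3⟩ := hE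
        have e4 := congrArg Complex.re e3
        rw [Complex.neg_re] at e4
        have r1 := integral_re e1
        have r2 := integral_re e2
        simp only [RCLike.re_to_complex] at r1 r2
        rw [← r1, ← r2] at e4
        simpa using e4
      · intro k
        rw [h1 k]
        have hci : Integrable (fun y => (V j (ω, y) : ℂ)) volume := ((h3 j).integrable (by norm_num)).ofReal
        have hcoef : UnitAddTorus.mFourierCoeff (fun y => ((V j (ω, y) - ∫ y, V j (ω, y) : ℝ) : ℂ)) k
            = c j k ω - (∫ y, UnitAddTorus.mFourier (-k) y) * ((∫ y, V j (ω, y) : ℝ) : ℂ) := by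
          simp only [hc, UnitAddTorus.mFourierCoeff, smul_eq_mul]
          push_cast
          simp only [mul_sub]
          rw [integral_sub, integral_mul_const]
          · refine hci.bdd_mul (c := 1) (UnitAddTorus.mFourier (-k)).continuous.aestronglyMeasurable ?_
            exact Eventually.of_forall fun y => (norm_mFourier_apply _ _).le
          · exact ((UnitAddTorus.mFourier (-k)).continuous.integrable_of_hasCompactSupport
              (HasCompactSupport.of_compactSpace _)).mul_const _
        rw [hcoef]
        by_cases hk : k = 0
        · subst hk
          simp [hc, UnitAddTorus.mFourierCoeff, UnitAddTorus.mFourier_zero, integral_complex_ofReal]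
        · rw [integral_mFourier_zero (neg_ne_zero.2 hk), zero_mul, sub_zero]
          have hkp : (kk k : ℂ) ≠ 0 := by
            obtain ⟨i, hi⟩ := Function.ne_iff.1 hk
            have : 0 < kk k := lt_of_lt_of_le (by simpa using hi) (hkk1 k i)
            exact_mod_cast this.ne'
          have hsum : (k j : ℂ) * ∑ i, (k i : ℂ) * c i k ω = kk k * c j k ω := by
            simp only [hkk]
            push_cast
            rw [Finset.mul_sum, Finset.sum_mul]
            refine Finset.sum_congr rfl fun i _ => ?_
            have := h2 k i j
            calc (k j : ℂ) * (k i * c i k ω) = k i * (k j * c i k ω) := by ring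
              _ = k i * (k i * c j k ω) := by rw [this]
              _ = _ := by ring
          simp only [hd]
          have hpi : (Real.pi : ℂ) ≠ 0 := by exact_mod_cast Real.pi_ne_zero
          field_simp
          linear_combination hsum
    · simp [indicator, hω]
  · intro j
    have : ∀ᵐ p ∂(m₁.prod (volume : Measure (UnitAddTorus (Fin N)))), p.1 ∈ S :=
      Measure.quasiMeasurePreserving_fst.ae hSae
    filter_upwards [this] with p hp
    simp [indicator, hp]

lemma norm_fo (k : ℤ) (x : UnitAddCircle) : ‖(fourier k x : ℂ)‖ = 1 := by
  rw [fourier_apply]; exact Circle.norm_coe _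

lemma sq_int_le {Y : Type*} [MeasurableSpace Y] (ν : Measure Y) [IsFiniteMeasure ν]
    (f : Y → ℂ) (hf : MemLp f 2 ν) : ‖∫ y, f y ∂ν‖ ^ 2 ≤ ν.real univ * ∫ y, ‖f y‖ ^ 2 ∂ν := by
  have h1 : ‖∫ y, f y ∂ν‖ ≤ ∫ y, ‖f y‖ ∂ν := norm_integral_le_integral_norm _
  have hi : Integrable (fun y => ‖f y‖) ν := (hf.integrable (by norm_num)).norm
  have hi2 : Integrable (fun y => ‖f y‖ ^ 2) ν :=
    (memLp_two_iff_integrable_sq_norm hf.aestronglyMeasurable).1 hf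
  set F := ∫ y, ‖f y‖ ∂ν with hF
  set c := ν.real univ with hc
  have hc0 : 0 ≤ c := measureReal_nonneg
  have h2 : ∀ t : ℝ, 0 ≤ (∫ y, ‖f y‖ ^ 2 ∂ν) - 2 * t * F + t ^ 2 * c := by
    intro t
    have : 0 ≤ ∫ y, (‖f y‖ - t) ^ 2 ∂ν := integral_nonneg fun y => sq_nonneg _
    have e : ∫ y, (‖f y‖ - t) ^ 2 ∂ν = (∫ y, ‖f y‖ ^ 2 ∂ν) - 2 * t * F + t ^ 2 * c := by
      have : ∀ y, (‖f y‖ - t) ^ 2 = ‖f y‖ ^ 2 - 2 * t * ‖f y‖ + t ^ 2 := fun y => by ring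
      simp only [this]
      have hA : Integrable (fun y => ‖f y‖ ^ 2 - 2 * t * ‖f y‖) ν := hi2.sub (hi.const_mul _)
      rw [integral_add hA (integrable_const _),
        integral_sub hi2 (hi.const_mul _), integral_const_mul]
      simp [hc, hF, mul_comm]
    rw [← e]; exact this
  have h3 : F ^ 2 ≤ c * ∫ y, ‖f y‖ ^ 2 ∂ν := by
    rcases eq_or_lt_of_le hc0 with h | h
    · have hz : ν = 0 := by
        rw [← Measure.measure_univ_eq_zero]
        have := h.symm
        rw [hc, measureReal_eq_zero_iff] at this
        exact this
      simp [hF, hz]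
    · have := h2 (F / c)
      have e : (∫ y, ‖f y‖ ^ 2 ∂ν) - 2 * (F / c) * F + (F / c) ^ 2 * c =
          ((c * ∫ y, ‖f y‖ ^ 2 ∂ν) - F ^ 2) / c := by
        field_simp; ring
      rw [e] at this
      have := (div_nonneg_iff.1 this)
      rcases this with h | h <;> linarith [h.1, h.2]
  exact (pow_le_pow_left₀ (norm_nonneg _) h1 2).trans h3

lemma memLp_partial {X Y : Type*} [MeasurableSpace X] [MeasurableSpace Y] (m₁ : Measure X)
    [IsFiniteMeasure m₁] (ν : Measure Y) [IsFiniteMeasure ν] (f : X × Y → ℂ)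
    (hm : StronglyMeasurable f) (hf : MemLp f 2 (m₁.prod ν)) :
    StronglyMeasurable (fun x => ∫ y, f (x, y) ∂ν) ∧ MemLp (fun x => ∫ y, f (x, y) ∂ν) 2 m₁ := by
  have h1 : StronglyMeasurable (fun x => ∫ y, f (x, y) ∂ν) :=
    StronglyMeasurable.integral_prod_right (f := fun x y => f (x, y)) hm
  refine ⟨h1, ?_⟩
  rw [memLp_two_iff_integrable_sq_norm h1.aestronglyMeasurable]
  have h2 := (memLp_two_iff_integrable_sq_norm hf.aestronglyMeasurable).1 hf
  refine (h2.integral_prod_left.const_mul (ν.real univ)).mono' (h1.norm.pow 2).aestronglyMeasurable ?_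
  filter_upwards [memLp_fiber m₁ ν f hm hf] with x hx
  rw [norm_pow, norm_norm]
  exact sq_int_le ν _ hx

section
variable {B : Type*} [MetricSpace B] [CompactSpace B] [MeasurableSpace B] [BorelSpace B] {N : ℕ}

lemma memLp_bdd_mul {X : Type*} [MeasurableSpace X] (m : Measure X) (f g : X → ℂ) (C : ℝ)
    (hf : MemLp f 2 m) (hg : AEStronglyMeasurable g m) (hb : ∀ x, ‖g x‖ ≤ C) :
    MemLp (fun x => f x * g x) 2 m := by
  refine hf.of_le_mul (c := C) (hf.aestronglyMeasurable.mul hg) (Eventually.of_forall fun x => ?_)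
  rw [norm_mul, mul_comm]
  gcongr
  exact hb x

lemma memLp_mul_mF {X : Type*} [MeasurableSpace X] (m₁ : Measure X) [IsFiniteMeasure m₁]
    (G : X × UnitAddTorus (Fin N) → ℂ)
    (hGm : StronglyMeasurable G) (hG : MemLp G 2 (m₁.prod volume)) (k : Fin N → ℤ) :
    StronglyMeasurable (fun p => G p * UnitAddTorus.mFourier k p.2) ∧
    MemLp (fun p => G p * UnitAddTorus.mFourier k p.2) 2 (m₁.prod volume) := by
  have h : StronglyMeasurable fun p : X × UnitAddTorus (Fin N) => UnitAddTorus.mFourier k p.2 :=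
    (UnitAddTorus.mFourier k).continuous.stronglyMeasurable.comp_measurable measurable_snd
  exact ⟨hGm.mul h, memLp_bdd_mul _ _ _ 1 hG h.aestronglyMeasurable
    fun p => (norm_mFourier_apply _ _).le⟩

lemma memLp_mul_fo {X : Type*} [MeasurableSpace X] (m₁ : Measure X) [IsFiniteMeasure m₁]
    (G : X × UnitAddCircle → ℂ)
    (hGm : StronglyMeasurable G) (hG : MemLp G 2 (m₁.prod volume)) (k : ℤ) :
    StronglyMeasurable (fun p => G p * fourier k p.2) ∧
    MemLp (fun p => G p * fourier k p.2) 2 (m₁.prod volume) := by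
  have h : StronglyMeasurable fun p : X × UnitAddCircle => (fourier k p.2 : ℂ) :=
    (fourier k).continuous.stronglyMeasurable.comp_measurable measurable_snd
  exact ⟨hGm.mul h, memLp_bdd_mul _ _ _ 1 hG h.aestronglyMeasurable
    fun p => (norm_fo _ _).le⟩

lemma echar_bound (f : C(B, ℂ)) (k0 : ℤ) (k : Fin N → ℤ) (p : KK B N) : ‖echar f k0 k p‖ ≤ ‖f‖ := by
  simp only [echar, ContinuousMap.coe_mk, norm_mul, norm_mFourier_apply, mul_one]
  have : ‖(fourier k0 p.1.2 : ℂ)‖ = 1 := norm_fo _ _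
  rw [this, mul_one]
  exact f.norm_coe_le_norm _

lemma integrable_echar (m : Measure (KK B N)) [IsFiniteMeasure m] (G : KK B N → ℂ) (hG : MemLp G 2 m)
    (f : C(B, ℂ)) (k0 : ℤ) (k : Fin N → ℤ) : Integrable (fun p => G p * echar f k0 k p) m :=
  (memLp_bdd_mul m G _ ‖f‖ hG (echar f k0 k).continuous.aestronglyMeasurable
    (echar_bound f k0 k)).integrable (by norm_num)

lemma echar_int (ν : Measure B) [IsFiniteMeasure ν] (G : KK B N → ℂ)
    (hG : MemLp G 2 ((ν.prod volume).prod volume)) (f : C(B, ℂ)) (k0 : ℤ) (k : Fin N → ℤ) :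
    ∫ p, G p * echar f k0 k p ∂((ν.prod volume).prod volume) =
      ∫ z, (f z.1 * fourier k0 z.2) * (∫ y, G (z, y) * UnitAddTorus.mFourier k y) ∂(ν.prod volume) := by
  rw [integral_prod _ (integrable_echar _ G hG f k0 k)]
  congr 1
  ext z
  rw [← integral_const_mul]
  congr 1
  ext y
  simp only [echar, ContinuousMap.coe_mk]
  ring

lemma f_int (ν : Measure B) [IsFiniteMeasure ν] (H : B × UnitAddCircle → ℂ)
    (hHm : StronglyMeasurable H) (hH : MemLp H 2 (ν.prod volume)) (f : C(B, ℂ)) (k0 : ℤ) :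
    ∫ z, (f z.1 * fourier k0 z.2) * H z ∂(ν.prod volume) =
      ∫ b, f b * (∫ s, H (b, s) * fourier k0 s) ∂ν := by
  have h := (memLp_mul_fo ν H hHm hH k0)
  have hf : AEStronglyMeasurable (fun z : B × UnitAddCircle => f z.1) (ν.prod volume) :=
    (f.continuous.comp continuous_fst).aestronglyMeasurable
  have hi := (memLp_bdd_mul (ν.prod volume) _ _ ‖f‖ h.2 hf (fun z => f.norm_coe_le_norm _)).integrable
    (by norm_num)
  have e : ∀ z : B × UnitAddCircle, (f z.1 * fourier k0 z.2) * H z = H z * fourier k0 z.2 * f z.1 := fun z => by ring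
  simp only [e]
  rw [integral_prod _ hi]
  congr 1
  ext b
  rw [← integral_const_mul]
  congr 1
  ext y
  ring

lemma uniq2 (ν : Measure B) [IsFiniteMeasure ν] (H : B × UnitAddCircle → ℂ)
    (hH : MemLp H 2 (ν.prod volume))
    (h : ∀ (f : C(B, ℂ)) k0, ∫ z, (f z.1 * fourier k0 z.2) * H z ∂(ν.prod volume) = 0) :
    H =ᵐ[ν.prod volume] 0 := by
  have h1 := echar_unique (N := 0) ((ν.prod volume).prod volume) (fun p => H p.1)
    (hH.comp_fst _) (by
      intro f k0 k
      rw [echar_int ν _ (hH.comp_fst _), ← h f k0]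
      congr 1
      ext z
      have : k = 0 := Subsingleton.elim _ _
      rw [this, UnitAddTorus.mFourier_zero]
      simp only [ContinuousMap.one_apply, mul_one]
      simp)
  filter_upwards [Measure.ae_ae_of_ae_prod h1] with z hz
  obtain ⟨y, hy⟩ := hz.exists
  exact hy

lemma uniq1 [Nonempty B] (H : UnitAddCircle → ℂ) (hH : MemLp H 2 volume)
    (h : ∀ k0, ∫ s, H s * fourier k0 s = 0) : H =ᵐ[volume] 0 := by
  obtain ⟨b0⟩ := ‹Nonempty B›
  have h1 := uniq2 (Measure.dirac b0) (fun z => H z.2) (hH.comp_snd _) (by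
    intro f k0
    have := integral_prod_mul (μ := Measure.dirac b0) (ν := (volume : Measure UnitAddCircle))
      (fun b => f b) (fun s => H s * fourier k0 s)
    rw [h k0, mul_zero] at this
    rw [← this]
    congr 1; ext z; ring)
  have h2 := Measure.ae_ae_of_ae_prod h1
  obtain ⟨b, hb⟩ := h2.exists
  exact hb

lemma yconst (ν : Measure B) [IsFiniteMeasure ν] (G : KK B N → ℂ) (hGm : StronglyMeasurable G)
    (hG : MemLp G 2 ((ν.prod volume).prod volume))
    (h : ∀ (f : C(B, ℂ)) k0 k, k ≠ 0 → ∫ p, G p * echar f k0 k p ∂((ν.prod volume).prod volume) = 0) :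
    G =ᵐ[(ν.prod volume).prod volume] fun p => ∫ y, G (p.1, y) := by
  have hp := memLp_partial (ν.prod volume) volume G hGm hG
  have hGb : MemLp (fun p : KK B N => ∫ y, G (p.1, y)) 2 ((ν.prod volume).prod volume) :=
    hp.2.comp_fst _
  have h1 := echar_unique ((ν.prod volume).prod volume) (fun p => G p - ∫ y, G (p.1, y))
    (hG.sub hGb) (by
      intro f k0 k
      simp only [sub_mul]
      rw [integral_sub (integrable_echar _ G hG f k0 k) (integrable_echar _ _ hGb f k0 k)]
      rw [echar_int ν _ hGb]
      simp only [integral_const_mul]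
      by_cases hk : k = 0
      · rw [echar_int ν _ hG]
        simp [hk, UnitAddTorus.mFourier_zero]
      · rw [h f k0 k hk, integral_mFourier_zero hk]
        simp)
  filter_upwards [h1] with p hp
  exact sub_eq_zero.1 hp

lemma coeff_zero (ν : Measure B) [IsFiniteMeasure ν] (G : KK B N → ℂ) (hGm : StronglyMeasurable G)
    (hG : MemLp G 2 ((ν.prod volume).prod volume)) (k : Fin N → ℤ)
    (h : ∀ (f : C(B, ℂ)) k0, ∫ p, G p * echar f k0 (-k) p ∂((ν.prod volume).prod volume) = 0) :
    ∀ᵐ z ∂(ν.prod volume), UnitAddTorus.mFourierCoeff (fun y => G (z, y)) k = 0 := by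
  have hmm := memLp_mul_mF (ν.prod volume) G hGm hG (-k)
  have hp := memLp_partial (ν.prod volume) volume _ hmm.1 hmm.2
  have h1 := uniq2 ν _ hp.2 (by
    intro f k0
    rw [← h f k0, echar_int ν _ hG])
  filter_upwards [h1] with z hz
  unfold UnitAddTorus.mFourierCoeff
  simp only [smul_eq_mul]
  rw [Pi.zero_apply] at hz
  rw [← hz]
  congr 1; ext y; ring

lemma sconst (ν : Measure B) [IsFiniteMeasure ν] (H : B × UnitAddCircle → ℂ) (hHm : StronglyMeasurable H)
    (hH : MemLp H 2 (ν.prod volume))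
    (h : ∀ (f : C(B, ℂ)) k0, k0 ≠ 0 → ∫ z, (f z.1 * fourier k0 z.2) * H z ∂(ν.prod volume) = 0) :
    H =ᵐ[ν.prod volume] fun z => ∫ s, H (z.1, s) := by
  have hp := memLp_partial ν volume H hHm hH
  have hHb : MemLp (fun p : B × UnitAddCircle => ∫ s, H (p.1, s)) 2 (ν.prod volume) :=
    hp.2.comp_fst _
  have hHbm : StronglyMeasurable (fun p : B × UnitAddCircle => ∫ s, H (p.1, s)) :=
    hp.1.comp_measurable measurable_fst
  have hint : ∀ (H : B × UnitAddCircle → ℂ), MemLp H 2 (ν.prod volume) → ∀ (f : C(B, ℂ)) k0,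
      Integrable (fun z => (f z.1 * fourier k0 z.2) * H z) (ν.prod volume) := by
    intro H hH f k0
    have := (memLp_bdd_mul (ν.prod volume) H (fun z => f z.1 * fourier k0 z.2) ‖f‖ hH
      (Continuous.aestronglyMeasurable (by fun_prop)) (fun z => by
        rw [norm_mul]
        have : ‖(fourier k0 z.2 : ℂ)‖ = 1 := norm_fo _ _
        rw [this, mul_one]
        exact f.norm_coe_le_norm _)).integrable (by norm_num)
    refine this.congr (Eventually.of_forall fun z => by ring)
  have h1 := uniq2 ν (fun z => H z - ∫ s, H (z.1, s)) (hH.sub hHb) (by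
      intro f k0
      simp only [mul_sub]
      rw [integral_sub (hint H hH f k0) (hint _ hHb f k0)]
      rw [f_int ν _ hHbm hHb]
      simp only [integral_const_mul]
      by_cases hk : k0 = 0
      · rw [f_int ν _ hHm hH]
        simp [hk]
      · rw [h f k0 hk, integral_fourier_zero hk]
        simp)
  filter_upwards [h1] with p hp
  exact sub_eq_zero.1 hp
end

/-- Test functions on `S`. -/
def IsTest {N : ℕ} (S : Set (ℝ × Vn N)) (ζ : ℝ × Vn N → ℝ) : Prop :=
  ContDiff ℝ (⊤ : ℕ∞) ζ ∧ HasCompactSupport ζ ∧ tsupport ζ ⊆ S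

section
variable {N : ℕ} {S : Set (ℝ × Vn N)}

lemma IsTest.continuous {ζ : ℝ × Vn N → ℝ} (h : IsTest S ζ) : Continuous ζ := h.1.continuous

lemma IsTest.pd {ζ : ℝ × Vn N → ℝ} (h : IsTest S ζ) (v : ℝ × Vn N) :
    IsTest S (fun q => fderiv ℝ ζ q v) := by
  refine ⟨?_, ?_, ?_⟩
  · exact (h.1.fderiv_right (m := (⊤ : ℕ∞)) (by exact_mod_cast le_top)).clm_apply contDiff_const
  · exact h.2.1.fderiv_apply ℝ v
  · exact (tsupport_fderiv_apply_subset ℝ v).trans h.2.2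

/-- Oscillating test function. -/
def wave (k0 : ℤ) (k : Fin N → ℤ) (e : ℝ) (ζ : ℝ × Vn N → ℝ) (q : ℝ × Vn N) : ℂ :=
  (ζ q : ℂ) * ex (phase k0 k q / e)

lemma contDiff_wave (k0 : ℤ) (k : Fin N → ℤ) (e : ℝ) {ζ : ℝ × Vn N → ℝ}
    (h : ContDiff ℝ (⊤ : ℕ∞) ζ) : ContDiff ℝ (⊤ : ℕ∞) (wave k0 k e ζ) := by
  unfold wave
  refine (Complex.ofRealCLM.contDiff.comp h).mul (contDiff_ex.comp ?_)
  exact (phase k0 k).contDiff.div_const e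

lemma wave_fderiv (k0 : ℤ) (k : Fin N → ℤ) (e : ℝ) {ζ : ℝ × Vn N → ℝ}
    (h : ContDiff ℝ (⊤ : ℕ∞) ζ) (q v : ℝ × Vn N) :
    fderiv ℝ (wave k0 k e ζ) q v = wave k0 k e (fun q => fderiv ℝ ζ q v) q +
      (2 * Real.pi * Complex.I * ((phase k0 k v / e : ℝ) : ℂ)) * wave k0 k e ζ q := by
  have h1 : HasFDerivAt (fun q => (ζ q : ℂ)) (Complex.ofRealCLM.comp (fderiv ℝ ζ q)) q :=
    Complex.ofRealCLM.hasFDerivAt.comp q (h.differentiable (by simp) q).hasFDerivAt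
  have h2 : HasFDerivAt (fun q => phase k0 k q / e) ((e⁻¹ : ℝ) • phase k0 k) q := by
    have := ((phase k0 k).hasFDerivAt (x := q)).const_smul (e⁻¹ : ℝ)
    refine this.congr_of_eventuallyEq (Eventually.of_forall fun x => ?_)
    simp [div_eq_inv_mul]
  have h3 := (hasFDerivAt_ex (phase k0 k q / e)).hasFDerivAt.comp q h2
  have h4 := (h1.mul h3).fderiv
  have : wave k0 k e ζ = (fun q => (ζ q : ℂ)) * (ex ∘ fun q => phase k0 k q / e) := by
    ext q; simp [wave]
  rw [this, h4]
  simp [wave, div_eq_inv_mul]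
  ring

lemma wave_support (k0 : ℤ) (k : Fin N → ℤ) (e : ℝ) (ζ : ℝ × Vn N → ℝ) (L : ℂ →L[ℝ] ℝ) :
    Function.support (fun q => L (wave k0 k e ζ q)) ⊆ Function.support ζ := by
  intro q hq hz
  apply hq
  have : ζ q = 0 := hz
  simp [wave, this]

lemma wave_test (k0 : ℤ) (k : Fin N → ℤ) (e : ℝ) {ζ : ℝ × Vn N → ℝ} (h : IsTest S ζ)
    (L : ℂ →L[ℝ] ℝ) : IsTest S (fun q => L (wave k0 k e ζ q)) := by
  refine ⟨L.contDiff.comp (contDiff_wave k0 k e h.1), ?_, ?_⟩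
  · exact h.2.1.mono' ((wave_support k0 k e ζ L).trans subset_closure)
  · exact (closure_mono (wave_support k0 k e ζ L)).trans h.2.2

lemma wave_test_fderiv (k0 : ℤ) (k : Fin N → ℤ) (e : ℝ) {ζ : ℝ × Vn N → ℝ} (h : IsTest S ζ)
    (L : ℂ →L[ℝ] ℝ) (q v : ℝ × Vn N) :
    fderiv ℝ (fun q => L (wave k0 k e ζ q)) q v = L (fderiv ℝ (wave k0 k e ζ) q v) := by
  have h1 := ((contDiff_wave k0 k e h.1).differentiable (by simp) q).hasFDerivAt
  have := (L.hasFDerivAt.comp q h1).fderiv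
  change fderiv ℝ (L ∘ wave k0 k e ζ) q v = _
  rw [this]; rfl

lemma int_split {X : Type*} [MeasurableSpace X] (μ : Measure X) (u : X → ℝ) (G : X → ℂ)
    (hi : Integrable (fun q => (u q : ℂ) * G q) μ) :
    ∫ q, (u q : ℂ) * G q ∂μ = ((∫ q, u q * (G q).re ∂μ : ℝ) : ℂ) +
      ((∫ q, u q * (G q).im ∂μ : ℝ) : ℂ) * Complex.I := by
  have := integral_re_add_im hi
  rw [← this]
  simp

lemma wave_bound {ζ : ℝ × Vn N → ℝ} (h : IsTest S ζ) : ∃ C : ℝ, 0 ≤ C ∧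
    ∀ q, ‖ζ q‖ ≤ C := by
  obtain ⟨C, hC⟩ := h.2.1.exists_bound_of_continuous h.continuous
  exact ⟨C, (norm_nonneg _).trans (hC 0), hC⟩

lemma wave_norm (k0 : ℤ) (k : Fin N → ℤ) (e : ℝ) (ζ : ℝ × Vn N → ℝ) (q : ℝ × Vn N) :
    ‖wave k0 k e ζ q‖ = ‖ζ q‖ := by
  simp [wave, norm_ex]

lemma wave_integrable [IsFiniteMeasure (volume.restrict S)] (k0 : ℤ) (k : Fin N → ℤ) (e : ℝ)
    {ζ : ℝ × Vn N → ℝ} (h : IsTest S ζ) (u : ℝ × Vn N → ℝ) (hu : MemLp u 2 (volume.restrict S)) :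
    Integrable (fun q => (u q : ℂ) * wave k0 k e ζ q) (volume.restrict S) := by
  obtain ⟨C, -, hC⟩ := wave_bound h
  exact (memLp_bdd_mul _ (fun q => (u q : ℂ)) _ C hu.ofReal
    (contDiff_wave k0 k e h.1).continuous.aestronglyMeasurable
    (fun q => by rw [wave_norm]; exact hC q)).integrable (by norm_num)

lemma wave_fderiv_int [IsFiniteMeasure (volume.restrict S)] (k0 : ℤ) (k : Fin N → ℤ) (e : ℝ)
    {ζ : ℝ × Vn N → ℝ} (h : IsTest S ζ) (u : ℝ × Vn N → ℝ) (hu : MemLp u 2 (volume.restrict S))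
    (v : ℝ × Vn N) :
    Integrable (fun q => (u q : ℂ) * fderiv ℝ (wave k0 k e ζ) q v) (volume.restrict S) ∧
    ∫ q in S, (u q : ℂ) * fderiv ℝ (wave k0 k e ζ) q v =
      (∫ q in S, (u q : ℂ) * wave k0 k e (fun q => fderiv ℝ ζ q v) q) +
      (2 * Real.pi * Complex.I * ((phase k0 k v / e : ℝ) : ℂ)) *
        ∫ q in S, (u q : ℂ) * wave k0 k e ζ q := by
  have h1 := wave_integrable k0 k e (h.pd v) u hu
  have h2 := (wave_integrable k0 k e h u hu).const_mul
    (2 * Real.pi * Complex.I * ((phase k0 k v / e : ℝ) : ℂ))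
  have e1 : (fun q => (u q : ℂ) * fderiv ℝ (wave k0 k e ζ) q v) = fun q =>
      (u q : ℂ) * wave k0 k e (fun q => fderiv ℝ ζ q v) q +
      (2 * Real.pi * Complex.I * ((phase k0 k v / e : ℝ) : ℂ)) * ((u q : ℂ) * wave k0 k e ζ q) := by
    ext q
    rw [wave_fderiv k0 k e h.1]
    ring
  rw [e1]
  refine ⟨h1.add h2, ?_⟩
  rw [integral_add h1 h2, integral_const_mul]

lemma cplx_weak [IsFiniteMeasure (volume.restrict S)] (k0 : ℤ) (k : Fin N → ℤ) (e : ℝ)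
    {ζ : ℝ × Vn N → ℝ} (h : IsTest S ζ) (u d : ℝ × Vn N → ℝ) (hu : MemLp u 2 (volume.restrict S))
    (hd : MemLp d 2 (volume.restrict S)) (v : ℝ × Vn N)
    (hw : ∀ ζ, IsTest S ζ → ∫ q in S, u q * fderiv ℝ ζ q v = - ∫ q in S, d q * ζ q) :
    (∫ q in S, (u q : ℂ) * wave k0 k e (fun q => fderiv ℝ ζ q v) q) +
      (2 * Real.pi * Complex.I * ((phase k0 k v / e : ℝ) : ℂ)) *
        ∫ q in S, (u q : ℂ) * wave k0 k e ζ q = - ∫ q in S, (d q : ℂ) * wave k0 k e ζ q := by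
  obtain ⟨hi, he⟩ := wave_fderiv_int k0 k e h u hu v
  rw [← he, int_split _ _ _ hi, int_split _ _ _ (wave_integrable k0 k e h d hd)]
  have h1 := hw _ (wave_test k0 k e h Complex.reCLM)
  have h2 := hw _ (wave_test k0 k e h Complex.imCLM)
  simp only [wave_test_fderiv k0 k e h] at h1 h2
  simp only [Complex.reCLM_apply, Complex.imCLM_apply] at h1 h2
  rw [h1, h2]
  push_cast
  ring

lemma cplx_bound [IsFiniteMeasure (volume.restrict S)] (k0 : ℤ) (k : Fin N → ℤ) (e : ℝ)
    {ζ : ℝ × Vn N → ℝ} (h : IsTest S ζ) (u : ℝ × Vn N → ℝ) (hu : MemLp u 2 (volume.restrict S))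
    (v : ℝ × Vn N) (M : ℝ)
    (h1 : |∫ q in S, u q * fderiv ℝ (fun q => Complex.reCLM (wave k0 k e ζ q)) q v| ≤ M)
    (h2 : |∫ q in S, u q * fderiv ℝ (fun q => Complex.imCLM (wave k0 k e ζ q)) q v| ≤ M) :
    ‖(∫ q in S, (u q : ℂ) * wave k0 k e (fun q => fderiv ℝ ζ q v) q) +
      (2 * Real.pi * Complex.I * ((phase k0 k v / e : ℝ) : ℂ)) *
        ∫ q in S, (u q : ℂ) * wave k0 k e ζ q‖ ≤ M + M := by
  obtain ⟨hi, he⟩ := wave_fderiv_int k0 k e h u hu v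
  rw [← he, int_split _ _ _ hi]
  simp only [wave_test_fderiv k0 k e h] at h1 h2
  simp only [Complex.reCLM_apply, Complex.imCLM_apply] at h1 h2
  refine (norm_add_le _ _).trans (add_le_add ?_ ?_)
  · rw [Complex.norm_real]; exact h1
  · rw [norm_mul, Complex.norm_I, mul_one, Complex.norm_real]; exact h2

/-- If the oscillating quotients are bounded, the limit vanishes. -/
lemma limit_zero (k0 : ℤ) (k : Fin N → ℤ) (ε : ℕ → ℝ) (hεpos : ∀ n, 0 < ε n)
    (hεlim : Tendsto ε atTop (nhds 0)) (v : ℝ × Vn N) (hv : phase k0 k v ≠ 0)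
    (a b : ℕ → ℂ) (A B : ℂ) (M : ℝ) (ha : Tendsto a atTop (nhds A)) (hb : Tendsto b atTop (nhds B))
    (h : ∀ n, ‖b n + (2 * Real.pi * Complex.I * ((phase k0 k v / ε n : ℝ) : ℂ)) * a n‖ ≤ M) :
    A = 0 := by
  have h1 : Tendsto (fun n => (ε n : ℂ) * (b n + (2 * Real.pi * Complex.I * ((phase k0 k v / ε n : ℝ) : ℂ)) * a n))
      atTop (nhds 0) := by
    rw [tendsto_zero_iff_norm_tendsto_zero]
    refine squeeze_zero (fun _ => norm_nonneg _) (g := fun n => ε n * M) (fun n => ?_) ?_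
    · rw [norm_mul, Complex.norm_real, Real.norm_of_nonneg (hεpos n).le]
      exact mul_le_mul_of_nonneg_left (h n) (hεpos n).le
    · simpa using hεlim.mul_const M
  have h2 : Tendsto (fun n => (ε n : ℂ) * (b n + (2 * Real.pi * Complex.I * ((phase k0 k v / ε n : ℝ) : ℂ)) * a n))
      atTop (nhds (0 * B + (2 * Real.pi * Complex.I * (phase k0 k v : ℂ)) * A)) := by
    have e : ∀ n, (ε n : ℂ) * (b n + (2 * Real.pi * Complex.I * ((phase k0 k v / ε n : ℝ) : ℂ)) * a n)
        = (ε n : ℂ) * b n + (2 * Real.pi * Complex.I * (phase k0 k v : ℂ)) * a n := by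
      intro n
      have : (ε n : ℂ) ≠ 0 := by exact_mod_cast (hεpos n).ne'
      push_cast
      field_simp
    simp only [e]
    have hε : Tendsto (fun n => (ε n : ℂ)) atTop (nhds 0) := by
      have := (Complex.continuous_ofReal.tendsto 0).comp hεlim
      rw [Complex.ofReal_zero] at this
      exact this
    exact (hε.mul hb).add (ha.const_mul _)
  have := tendsto_nhds_unique h1 h2
  rw [zero_mul, zero_add] at this
  have h3 : (2 * Real.pi * Complex.I * (phase k0 k v : ℂ)) ≠ 0 := by
    have : (phase k0 k v : ℂ) ≠ 0 := by exact_mod_cast hv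
    simp [Real.pi_ne_zero, this]
  exact (mul_eq_zero.1 this.symm).resolve_left h3

end

section
variable {B : Type*} [MetricSpace B] [CompactSpace B] [MeasurableSpace B] [BorelSpace B] {N : ℕ}
  {S : Set (ℝ × Vn N)}

/-- pull back of a test function to the base space -/
def tf (ι : C(B, ℝ × Vn N)) (ζ : ℝ × Vn N → ℝ) (h : Continuous ζ) : C(B, ℂ) :=
  ⟨fun b => (ζ (ι b) : ℂ), by fun_prop⟩

lemma toAll (hSo : IsOpen S) [IsFiniteMeasure (volume.restrict S)] (r : ℝ × Vn N → B)
    (hr : Continuous r) (ι : C(B, ℝ × Vn N)) (hι : ∀ q ∈ S, ι (r q) = q)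
    (G : KK B N → ℂ) (hGm : StronglyMeasurable G) (hG : MemLp G 2 (mK (volume.restrict S) r))
    (k0 : ℤ) (k : Fin N → ℤ)
    (h : ∀ ζ (hζ : IsTest S ζ), ∫ p, G p * echar (tf ι ζ hζ.continuous) k0 k p ∂(mK (volume.restrict S) r) = 0)
    (f : C(B, ℂ)) : ∫ p, G p * echar f k0 k p ∂(mK (volume.restrict S) r) = 0 := by
  set μ := volume.restrict S with hμ
  set ν := μ.map r with hν
  change MemLp G 2 ((ν.prod volume).prod volume) at hG
  have hmm := memLp_mul_mF (ν.prod volume) G hGm hG k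
  have hp := memLp_partial (ν.prod volume) volume _ hmm.1 hmm.2
  have hq := memLp_mul_fo ν _ hp.1 hp.2 k0
  have hh := memLp_partial ν volume _ hq.1 hq.2
  set H : B → ℂ := fun b => ∫ s, (∫ y, G ((b, s), y) * UnitAddTorus.mFourier k y) * fourier k0 s with hH
  have hrep : ∀ f : C(B, ℂ), ∫ p, G p * echar f k0 k p ∂(mK μ r) = ∫ q in S, f (r q) * H (r q) := by
    intro f
    change ∫ p, G p * echar f k0 k p ∂((ν.prod volume).prod volume) = _
    rw [echar_int ν G hG, f_int ν _ hp.1 hp.2]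
    exact integral_map (φ := r) hr.measurable.aemeasurable
      (f.continuous.aestronglyMeasurable.mul hh.1.aestronglyMeasurable)
  have hHr : Integrable (fun q => H (r q)) μ := by
    have h1 : Integrable H ν := hh.2.integrable (by norm_num)
    exact h1.comp_measurable hr.measurable
  have hz : ∀ᵐ q ∂volume, q ∈ S → H (r q) = 0 := by
    refine hSo.ae_eq_zero_of_integral_contDiff_smul_eq_zero
      (IntegrableOn.locallyIntegrableOn hHr) ?_
    intro g hg1 hg2 hg3
    have h1 := h g ⟨hg1, hg2, hg3⟩
    rw [hrep] at h1
    rw [← h1]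
    have hS := setIntegral_eq_integral_of_forall_compl_eq_zero (s := S) (μ := volume)
      (f := fun q => g q • H (r q)) (by
        intro q hq
        have : g q = 0 := image_eq_zero_of_notMem_tsupport fun h => hq (hg3 h)
        simp [this])
    rw [← hS]
    refine setIntegral_congr_fun hSo.measurableSet fun q hq => ?_
    simp [tf, hι q hq]
  rw [hrep]
  refine integral_eq_zero_of_ae ?_
  rw [EventuallyEq, ae_restrict_iff' hSo.measurableSet]
  filter_upwards [hz] with q hq hqS
  simp [hq hqS]

lemma lim_wave (hSo : IsOpen S) [IsFiniteMeasure (volume.restrict S)] (r : ℝ × Vn N → B)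
    (ι : C(B, ℝ × Vn N)) (hι : ∀ q ∈ S, ι (r q) = q) (ε : ℕ → ℝ)
    (u : ℕ → ℝ × Vn N → ℝ) (U : KK B N → ℝ)
    (hlim : ∀ Ψ : C(KK B N, ℂ), Tendsto (fun n => ∫ q in S, (u n q : ℂ) * Ψ (rho r (ε n) q)) atTop
      (nhds (∫ p, (U p : ℂ) * Ψ p ∂(mK (volume.restrict S) r))))
    (k0 : ℤ) (k : Fin N → ℤ) (ζ : ℝ × Vn N → ℝ) (hζ : Continuous ζ) :
    Tendsto (fun n => ∫ q in S, (u n q : ℂ) * wave k0 k (ε n) ζ q) atTop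
      (nhds (∫ p, (U p : ℂ) * echar (tf ι ζ hζ) k0 k p ∂(mK (volume.restrict S) r))) := by
  refine (hlim (echar (tf ι ζ hζ) k0 k)).congr fun n => ?_
  refine setIntegral_congr_fun hSo.measurableSet fun q hq => ?_
  simp only [echar_rho, wave, tf, ContinuousMap.coe_mk, hι q hq]

/-- Bundled limit hypothesis. -/
def LimC (S : Set (ℝ × Vn N)) (r : ℝ × Vn N → B) (ε : ℕ → ℝ)
    (u : ℕ → ℝ × Vn N → ℝ) (U : KK B N → ℝ) : Prop :=
  ∀ Ψ : C(KK B N, ℂ), Tendsto (fun n => ∫ q in S, (u n q : ℂ) * Ψ (rho r (ε n) q)) atTop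
      (nhds (∫ p, (U p : ℂ) * Ψ p ∂(mK (volume.restrict S) r)))

lemma phase_ej (k0 : ℤ) (k : Fin N → ℤ) (j : Fin N) :
    phase k0 k ((0 : ℝ), Pi.single j 1) = k j := by
  simp [phase_apply, Pi.single_apply]

lemma ident_a (hSo : IsOpen S) [IsFiniteMeasure (volume.restrict S)] (r : ℝ × Vn N → B)
    (ι : C(B, ℝ × Vn N)) (hι : ∀ q ∈ S, ι (r q) = q) (ε : ℕ → ℝ)
    (hεpos : ∀ n, 0 < ε n) (hεlim : Tendsto ε atTop (nhds 0))
    (u : ℕ → ℝ × Vn N → ℝ) (d : Fin N → ℕ → ℝ × Vn N → ℝ)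
    (hu : ∀ n, MemLp (u n) 2 (volume.restrict S)) (hd : ∀ j n, MemLp (d j n) 2 (volume.restrict S))
    (U : KK B N → ℝ) (V : Fin N → KK B N → ℝ) (hU : LimC S r ε u U) (hV : ∀ j, LimC S r ε (d j) (V j))
    (hw : ∀ n j ζ, IsTest S ζ → ∫ q in S, u n q * fderiv ℝ ζ q ((0 : ℝ), Pi.single j 1)
      = - ∫ q in S, d j n q * ζ q)
    (k0 : ℤ) (k : Fin N → ℤ) (hk : k ≠ 0) (ζ : ℝ × Vn N → ℝ) (hζ : IsTest S ζ) :
    ∫ p, (U p : ℂ) * echar (tf ι ζ hζ.continuous) k0 k p ∂(mK (volume.restrict S) r) = 0 := by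
  obtain ⟨j, hj⟩ : ∃ j, k j ≠ 0 := by
    by_contra hc
    push Not at hc
    exact hk (funext hc)
  have h1 := lim_wave hSo r ι hι ε u U hU k0 k ζ hζ.continuous
  have h2 := lim_wave hSo r ι hι ε u U hU k0 k _ (hζ.pd ((0 : ℝ), Pi.single j 1)).continuous
  have h3 := lim_wave hSo r ι hι ε (d j) (V j) (hV j) k0 k ζ hζ.continuous
  obtain ⟨M, hM⟩ := h3.norm.bddAbove_range
  refine limit_zero k0 k ε hεpos hεlim ((0 : ℝ), Pi.single j 1) (by rw [phase_ej]; exact_mod_cast hj)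
    _ _ _ _ M h1 h2 fun n => ?_
  rw [cplx_weak k0 k (ε n) hζ (u n) (d j n) (hu n) (hd j n) _ (hw n j), norm_neg]
  exact hM ⟨n, rfl⟩

lemma ident_c (hSo : IsOpen S) [IsFiniteMeasure (volume.restrict S)] (r : ℝ × Vn N → B)
    (ι : C(B, ℝ × Vn N)) (hι : ∀ q ∈ S, ι (r q) = q) (ε : ℕ → ℝ)
    (u : ℕ → ℝ × Vn N → ℝ) (d : Fin N → ℕ → ℝ × Vn N → ℝ)
    (hu : ∀ n, MemLp (u n) 2 (volume.restrict S)) (hd : ∀ j n, MemLp (d j n) 2 (volume.restrict S))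
    (U : KK B N → ℝ) (V : Fin N → KK B N → ℝ) (hU : LimC S r ε u U) (hV : ∀ j, LimC S r ε (d j) (V j))
    (hw : ∀ n j ζ, IsTest S ζ → ∫ q in S, u n q * fderiv ℝ ζ q ((0 : ℝ), Pi.single j 1)
      = - ∫ q in S, d j n q * ζ q)
    (k0 : ℤ) (ζ : ℝ × Vn N → ℝ) (hζ : IsTest S ζ) (j : Fin N) :
    ∫ p, (U p : ℂ) * echar (tf ι _ (hζ.pd ((0 : ℝ), Pi.single j 1)).continuous) k0 0 p ∂(mK (volume.restrict S) r) =
    - ∫ p, (V j p : ℂ) * echar (tf ι ζ hζ.continuous) k0 0 p ∂(mK (volume.restrict S) r) := by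
  have h2 := lim_wave hSo r ι hι ε u U hU k0 0 _ (hζ.pd ((0 : ℝ), Pi.single j 1)).continuous
  have h3 := (lim_wave hSo r ι hι ε (d j) (V j) (hV j) k0 0 ζ hζ.continuous).neg
  refine tendsto_nhds_unique h2 (h3.congr fun n => ?_)
  rw [← cplx_weak k0 0 (ε n) hζ (u n) (d j n) (hu n) (hd j n) _ (hw n j), phase_ej]
  simp

lemma ident_b (hSo : IsOpen S) [IsFiniteMeasure (volume.restrict S)] (r : ℝ × Vn N → B)
    (ι : C(B, ℝ × Vn N)) (hι : ∀ q ∈ S, ι (r q) = q) (ε : ℕ → ℝ)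
    (hεpos : ∀ n, 0 < ε n) (hεlim : Tendsto ε atTop (nhds 0))
    (u : ℕ → ℝ × Vn N → ℝ) (d : Fin N → ℕ → ℝ × Vn N → ℝ)
    (hu : ∀ n, MemLp (u n) 2 (volume.restrict S)) (hd : ∀ j n, MemLp (d j n) 2 (volume.restrict S))
    (U : KK B N → ℝ) (V : Fin N → KK B N → ℝ) (hU : LimC S r ε u U) (hV : ∀ j, LimC S r ε (d j) (V j))
    (hw : ∀ n j ζ, IsTest S ζ → ∫ q in S, u n q * fderiv ℝ ζ q ((0 : ℝ), Pi.single j 1)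
      = - ∫ q in S, d j n q * ζ q)
    (k0 : ℤ) (k : Fin N → ℤ) (ζ : ℝ × Vn N → ℝ) (hζ : IsTest S ζ) (i j : Fin N) :
    (k i : ℂ) * ∫ p, (V j p : ℂ) * echar (tf ι ζ hζ.continuous) k0 k p ∂(mK (volume.restrict S) r) =
    (k j : ℂ) * ∫ p, (V i p : ℂ) * echar (tf ι ζ hζ.continuous) k0 k p ∂(mK (volume.restrict S) r) := by
  by_cases hk : k = 0
  · simp [hk]
  have hz : ∀ l : Fin N, Tendsto (fun n => ∫ q in S, (u n q : ℂ) *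
      wave k0 k (ε n) (fun q => fderiv ℝ ζ q ((0 : ℝ), Pi.single l 1)) q) atTop (nhds 0) := by
    intro l
    have := lim_wave hSo r ι hι ε u U hU k0 k _ (hζ.pd ((0 : ℝ), Pi.single l 1)).continuous
    rwa [ident_a hSo r ι hι ε hεpos hεlim u d hu hd U V hU hV hw k0 k hk _ (hζ.pd _)] at this
  have hv := fun l => lim_wave hSo r ι hι ε (d l) (V l) (hV l) k0 k ζ hζ.continuous
  have h1 := ((hv j).const_mul (k i : ℂ)).sub ((hv i).const_mul (k j : ℂ))
  have h2 := ((hz i).const_mul (k j : ℂ)).sub ((hz j).const_mul (k i : ℂ))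
  rw [mul_zero, mul_zero, sub_zero] at h2
  refine sub_eq_zero.1 (tendsto_nhds_unique h1 (h2.congr fun n => ?_))
  have ej := cplx_weak k0 k (ε n) hζ (u n) (d j n) (hu n) (hd j n) _ (hw n j)
  have ei := cplx_weak k0 k (ε n) hζ (u n) (d i n) (hu n) (hd i n) _ (hw n i)
  rw [phase_ej] at ei ej
  push_cast at ei ej
  linear_combination (k j : ℂ) * ei - (k i : ℂ) * ej

lemma ident_d (hSo : IsOpen S) [IsFiniteMeasure (volume.restrict S)] (r : ℝ × Vn N → B)
    (ι : C(B, ℝ × Vn N)) (hι : ∀ q ∈ S, ι (r q) = q) (ε : ℕ → ℝ)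
    (hεpos : ∀ n, 0 < ε n) (hεlim : Tendsto ε atTop (nhds 0))
    (u : ℕ → ℝ × Vn N → ℝ)
    (hu : ∀ n, MemLp (u n) 2 (volume.restrict S))
    (U : KK B N → ℝ) (hU : LimC S r ε u U) (C : ℝ)
    (hw : ∀ n ζ, IsTest S ζ → |∫ q in S, u n q * fderiv ℝ ζ q ((1 : ℝ), (0 : Vn N))|
      ≤ C * Real.sqrt (∫ q in S, ((ζ q) ^ 2 + ∑ j, (fderiv ℝ ζ q ((0 : ℝ), Pi.single j 1)) ^ 2)))
    (k0 : ℤ) (hk0 : k0 ≠ 0) (ζ : ℝ × Vn N → ℝ) (hζ : IsTest S ζ) :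
    ∫ p, (U p : ℂ) * echar (tf ι ζ hζ.continuous) k0 0 p ∂(mK (volume.restrict S) r) = 0 := by
  have h1 := lim_wave hSo r ι hι ε u U hU k0 0 ζ hζ.continuous
  have h2 := lim_wave hSo r ι hι ε u U hU k0 0 _ (hζ.pd ((1 : ℝ), (0 : Vn N))).continuous
  set K := ∫ q in S, ((ζ q) ^ 2 + ∑ j, (fderiv ℝ ζ q ((0 : ℝ), Pi.single j 1)) ^ 2) with hK
  have hsq : ∀ η : ℝ × Vn N → ℝ, IsTest S η → Integrable (fun q => (η q) ^ 2) (volume.restrict S) := by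
    intro η hη
    refine Integrable.restrict (Continuous.integrable_of_hasCompactSupport (hη.continuous.pow 2) ?_)
    refine hη.2.1.mono fun q hq hq' => hq ?_
    have : η q = 0 := hq'
    simp [this]
  have hKi : Integrable (fun q => (ζ q) ^ 2 + ∑ j, (fderiv ℝ ζ q ((0 : ℝ), Pi.single j 1)) ^ 2)
      (volume.restrict S) :=
    (hsq ζ hζ).add (integrable_finset_sum _ fun j _ => hsq _ (hζ.pd ((0 : ℝ), Pi.single j 1)))
  have key : ∀ (L : ℂ →L[ℝ] ℝ), (∀ z, |L z| ≤ ‖z‖) → ∀ n,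
      |∫ q in S, u n q * fderiv ℝ (fun q => L (wave k0 0 (ε n) ζ q)) q ((1 : ℝ), (0 : Vn N))|
        ≤ |C| * Real.sqrt K := by
    intro L hL n
    have ht := wave_test k0 0 (ε n) hζ L
    refine (hw n _ ht).trans ?_
    refine mul_le_mul (le_abs_self C) (Real.sqrt_le_sqrt ?_) (Real.sqrt_nonneg _) (abs_nonneg _)
    refine integral_mono_of_nonneg (Eventually.of_forall fun q => ?_) hKi
      (Eventually.of_forall fun q => ?_)
    · positivity
    · have hb : ∀ η : ℝ × Vn N → ℝ, (L (wave k0 0 (ε n) η q)) ^ 2 ≤ (η q) ^ 2 := by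
        intro η
        refine sq_le_sq.2 ((hL _).trans ?_)
        rw [wave_norm, Real.norm_eq_abs]
      refine add_le_add (hb ζ) (Finset.sum_le_sum fun j _ => ?_)
      rw [wave_test_fderiv k0 0 (ε n) hζ L, wave_fderiv k0 0 (ε n) hζ.1, phase_ej]
      simpa using hb (fun q => fderiv ℝ ζ q ((0 : ℝ), Pi.single j 1))
  refine limit_zero k0 0 ε hεpos hεlim ((1 : ℝ), (0 : Vn N)) (by simp [phase_apply, hk0])
    _ _ _ _ (|C| * Real.sqrt K + |C| * Real.sqrt K) h1 h2 fun n => ?_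
  exact cplx_bound k0 0 (ε n) hζ (u n) (hu n) _ _
    (key Complex.reCLM (fun z => Complex.abs_re_le_norm z) n)
    (key Complex.imCLM (fun z => Complex.abs_im_le_norm z) n)

end

lemma memLp_partial_real {X Y : Type*} [MeasurableSpace X] [MeasurableSpace Y] (m₁ : Measure X)
    [IsFiniteMeasure m₁] (ν : Measure Y) [IsFiniteMeasure ν] (f : X × Y → ℝ)
    (hm : StronglyMeasurable f) (hf : MemLp f 2 (m₁.prod ν)) :
    StronglyMeasurable (fun x => ∫ y, f (x, y) ∂ν) ∧ MemLp (fun x => ∫ y, f (x, y) ∂ν) 2 m₁ := by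
  have h1 : StronglyMeasurable (fun x => ∫ y, f (x, y) ∂ν) :=
    StronglyMeasurable.integral_prod_right (f := fun x y => f (x, y)) hm
  refine ⟨h1, ?_⟩
  have h2 := (memLp_partial m₁ ν (fun p => (f p : ℂ))
    (Complex.continuous_ofReal.comp_stronglyMeasurable hm) hf.ofReal).2
  simp only [integral_complex_ofReal] at h2
  have h3 := h2.re
  simpa using h3

lemma bdd_cont {K : Type*} [TopologicalSpace K] [CompactSpace K] [MeasurableSpace K]
    {X : Type*} [MeasurableSpace X] (μ : Measure X) [IsFiniteMeasure μ]
    [OpensMeasurableSpace K]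
    (ρ : X → K) (hρ : Measurable ρ) (u : X → ℝ) (hu : MemLp u 2 μ) (Ψ : C(K, ℂ)) :
    Integrable (fun q => (u q : ℂ) * Ψ (ρ q)) μ :=
  (memLp_bdd_mul μ (fun q => (u q : ℂ)) (fun q => Ψ (ρ q)) ‖Ψ‖ hu.ofReal
    ((Ψ.continuous.measurable.comp hρ).aestronglyMeasurable)
    (fun q => Ψ.norm_coe_le_norm _)).integrable (by norm_num)

section
variable {B : Type*} [MetricSpace B] [CompactSpace B] [MeasurableSpace B] [BorelSpace B] {N : ℕ}
  {S : Set (ℝ × Vn N)}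

lemma limC_of_real [IsFiniteMeasure (volume.restrict S)] (r : ℝ × Vn N → B) (hr : Continuous r)
    (ε : ℕ → ℝ) (u : ℕ → ℝ × Vn N → ℝ) (U : KK B N → ℝ)
    (hu : ∀ n, MemLp (u n) 2 (volume.restrict S)) (hU : MemLp U 2 (mK (volume.restrict S) r))
    (h : ∀ Ψ : C(KK B N, ℝ), Tendsto (fun n => ∫ q in S, u n q * Ψ (rho r (ε n) q)) atTop
      (nhds (∫ p, U p * Ψ p ∂(mK (volume.restrict S) r)))) : LimC S r ε u U := by
  intro Ψ
  have e1 : ∀ n, ∫ q in S, (u n q : ℂ) * Ψ (rho r (ε n) q) = _ := fun n =>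
    int_split _ _ _ (bdd_cont (volume.restrict S) (rho r (ε n)) (continuous_rho r hr _).measurable (u n) (hu n) Ψ)
  have e2 : ∫ p, (U p : ℂ) * Ψ p ∂(mK (volume.restrict S) r) = _ :=
    int_split _ _ _ (bdd_cont (mK (volume.restrict S) r) id measurable_id U hU Ψ)
  rw [e2]
  simp only [e1]
  have h1 := h ⟨fun p => (Ψ p).re, by fun_prop⟩
  have h2 := h ⟨fun p => (Ψ p).im, by fun_prop⟩
  simp only [ContinuousMap.coe_mk] at h1 h2
  exact ((Complex.continuous_ofReal.tendsto _).comp h1).add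
    (((Complex.continuous_ofReal.tendsto _).comp h2).mul_const _)

/-- y-independence of the limit -/
lemma core_yconst (hSo : IsOpen S) [IsFiniteMeasure (volume.restrict S)] (r : ℝ × Vn N → B)
    (hr : Continuous r)
    (ι : C(B, ℝ × Vn N)) (hι : ∀ q ∈ S, ι (r q) = q) (U : KK B N → ℝ) (hUm : StronglyMeasurable U)
    (hU2 : MemLp U 2 (mK (volume.restrict S) r))
    (ha : ∀ (k0 : ℤ) (k : Fin N → ℤ) (_ : k ≠ 0) (ζ : ℝ × Vn N → ℝ) (hζ : IsTest S ζ),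
      ∫ p, (U p : ℂ) * echar (tf ι ζ hζ.continuous) k0 k p ∂(mK (volume.restrict S) r) = 0) :
    U =ᵐ[mK (volume.restrict S) r] fun p => ∫ y, U (p.1, y) := by
  have hm : StronglyMeasurable (fun p => (U p : ℂ)) := Complex.continuous_ofReal.comp_stronglyMeasurable hUm
  have := yconst ((volume.restrict S).map r) (fun p => (U p : ℂ)) hm hU2.ofReal (fun f k0 k hk =>
    toAll hSo r hr ι hι _ hm hU2.ofReal k0 k (fun ζ hζ => ha k0 k hk ζ hζ) f)
  refine Eventually.mono this fun p hp => ?_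
  simp only [integral_complex_ofReal] at hp
  exact_mod_cast hp

lemma core_curl (hSo : IsOpen S) [IsFiniteMeasure (volume.restrict S)] (r : ℝ × Vn N → B)
    (hr : Continuous r)
    (ι : C(B, ℝ × Vn N)) (hι : ∀ q ∈ S, ι (r q) = q) (V : Fin N → KK B N → ℝ)
    (hVm : ∀ j, StronglyMeasurable (V j))
    (hV2 : ∀ j, MemLp (V j) 2 (mK (volume.restrict S) r))
    (hb : ∀ (k0 : ℤ) (k : Fin N → ℤ) (ζ : ℝ × Vn N → ℝ) (hζ : IsTest S ζ) (i j : Fin N),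
    (k i : ℂ) * ∫ p, (V j p : ℂ) * echar (tf ι ζ hζ.continuous) k0 k p ∂(mK (volume.restrict S) r) =
    (k j : ℂ) * ∫ p, (V i p : ℂ) * echar (tf ι ζ hζ.continuous) k0 k p ∂(mK (volume.restrict S) r))
    (k : Fin N → ℤ) (i j : Fin N) :
    ∀ᵐ ω ∂(((volume.restrict S).map r).prod volume),
      (k i : ℂ) * UnitAddTorus.mFourierCoeff (fun y => (V j (ω, y) : ℂ)) k =
      (k j : ℂ) * UnitAddTorus.mFourierCoeff (fun y => (V i (ω, y) : ℂ)) k := by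
  have hm : ∀ j, StronglyMeasurable (fun p => (V j p : ℂ)) := fun j =>
    Complex.continuous_ofReal.comp_stronglyMeasurable (hVm j)
  set G : KK B N → ℂ := fun p => (k i : ℂ) * (V j p : ℂ) - (k j : ℂ) * (V i p : ℂ) with hG
  have hGm : StronglyMeasurable G := ((hm j).const_mul _).sub ((hm i).const_mul _)
  have hG2 : MemLp G 2 (mK (volume.restrict S) r) :=
    ((hV2 j).ofReal.const_mul (k i : ℂ)).sub ((hV2 i).ofReal.const_mul (k j : ℂ))
  have h1 := coeff_zero ((volume.restrict S).map r) G hGm hG2 k (fun f k0 =>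
    toAll hSo r hr ι hι G hGm hG2 k0 (-k) (fun ζ hζ => by
      have hi := fun l => integrable_echar (mK (volume.restrict S) r) (fun p => (V l p : ℂ)) (hV2 l).ofReal
        (tf ι ζ hζ.continuous) k0 (-k)
      have e : ∀ p, G p * echar (tf ι ζ hζ.continuous) k0 (-k) p =
        (k i : ℂ) * ((V j p : ℂ) * echar (tf ι ζ hζ.continuous) k0 (-k) p) -
        (k j : ℂ) * ((V i p : ℂ) * echar (tf ι ζ hζ.continuous) k0 (-k) p) := fun p => by
          simp only [hG]; ring
      simp only [e]
      rw [integral_sub ((hi j).const_mul _) ((hi i).const_mul _), integral_const_mul, integral_const_mul]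
      have := hb k0 (-k) ζ hζ i j
      simp only [Pi.neg_apply, Int.cast_neg] at this
      linear_combination -this) f)
  filter_upwards [h1, memLp_fiber _ volume _ (hm i) (hV2 i).ofReal,
    memLp_fiber _ volume _ (hm j) (hV2 j).ofReal] with ω h hi hj
  have hint : ∀ l, MemLp (fun y => (V l (ω, y) : ℂ)) 2 volume → Integrable (fun y : UnitAddTorus (Fin N) =>
      UnitAddTorus.mFourier (-k) y * (V l (ω, y) : ℂ)) volume := fun l hl => by
    have := (memLp_bdd_mul volume _ (fun y => UnitAddTorus.mFourier (-k) y) 1 hl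
      (UnitAddTorus.mFourier (-k)).continuous.aestronglyMeasurable
      (fun y => (norm_mFourier_apply _ _).le)).integrable (by norm_num)
    exact this.congr (Eventually.of_forall fun y => mul_comm _ _)
  unfold UnitAddTorus.mFourierCoeff at h ⊢
  simp only [smul_eq_mul] at h ⊢
  have e : ∀ y, UnitAddTorus.mFourier (-k) y * G (ω, y) =
    (k i : ℂ) * (UnitAddTorus.mFourier (-k) y * (V j (ω, y) : ℂ)) -
    (k j : ℂ) * (UnitAddTorus.mFourier (-k) y * (V i (ω, y) : ℂ)) := fun y => by simp only [hG]; ring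
  simp only [e] at h
  rw [integral_sub ((hint j hj).const_mul _) ((hint i hi).const_mul _), integral_const_mul,
    integral_const_mul] at h
  exact sub_eq_zero.1 h

lemma echar_int0 (ν : Measure B) [IsFiniteMeasure ν] (U : KK B N → ℝ)
    (hU : MemLp U 2 ((ν.prod volume).prod volume)) (f : C(B, ℂ)) (k0 : ℤ) :
    ∫ p, (U p : ℂ) * echar f k0 0 p ∂((ν.prod volume).prod volume) =
      ∫ z, (f z.1 * fourier k0 z.2) * ((∫ y, U (z, y) : ℝ) : ℂ) ∂(ν.prod volume) := by
  refine (echar_int ν (fun p => (U p : ℂ)) hU.ofReal f k0 0).trans ?_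
  congr 1; ext z
  rw [← integral_complex_ofReal, UnitAddTorus.mFourier_zero]
  simp

lemma core_sconst (hSo : IsOpen S) [IsFiniteMeasure (volume.restrict S)] (r : ℝ × Vn N → B)
    (hr : Continuous r)
    (ι : C(B, ℝ × Vn N)) (hι : ∀ q ∈ S, ι (r q) = q) (U : KK B N → ℝ) (hUm : StronglyMeasurable U)
    (hU2 : MemLp U 2 (mK (volume.restrict S) r))
    (hd : ∀ (k0 : ℤ) (_ : k0 ≠ 0) (ζ : ℝ × Vn N → ℝ) (hζ : IsTest S ζ),
      ∫ p, (U p : ℂ) * echar (tf ι ζ hζ.continuous) k0 0 p ∂(mK (volume.restrict S) r) = 0) :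
    (fun z => ∫ y, U (z, y)) =ᵐ[((volume.restrict S).map r).prod volume]
      fun z => ∫ s, ∫ y, U ((z.1, s), y) := by
  have hm : StronglyMeasurable (fun p => (U p : ℂ)) := Complex.continuous_ofReal.comp_stronglyMeasurable hUm
  have hp := memLp_partial_real (((volume.restrict S).map r).prod volume) volume U hUm hU2
  have := sconst ((volume.restrict S).map r) (fun z => ((∫ y, U (z, y) : ℝ) : ℂ))
    (Complex.continuous_ofReal.comp_stronglyMeasurable hp.1) hp.2.ofReal (fun f k0 hk => by
      rw [← echar_int0 _ U hU2]
      exact toAll hSo r hr ι hι _ hm hU2.ofReal k0 0 (fun ζ hζ => hd k0 hk ζ hζ) f)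
  refine Eventually.mono this fun p hp => ?_
  simp only [integral_complex_ofReal] at hp
  exact_mod_cast hp

lemma core_weak [Nonempty B] (ν : Measure B) [IsFiniteMeasure ν] (U V : B × UnitAddCircle → ℝ)
    (hUm : StronglyMeasurable U) (hVm : StronglyMeasurable V)
    (hU2 : MemLp U 2 (ν.prod volume)) (hV2 : MemLp V 2 (ν.prod volume)) (f g : C(B, ℝ))
    (h : ∀ k0 : ℤ, ∫ z, (((g z.1 : ℝ) : ℂ) * fourier k0 z.2) * (U z : ℂ) ∂(ν.prod volume) =
      - ∫ z, (((f z.1 : ℝ) : ℂ) * fourier k0 z.2) * (V z : ℂ) ∂(ν.prod volume)) :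
    ∀ᵐ s ∂(volume : Measure UnitAddCircle), ∫ b, U (b, s) * g b ∂ν = - ∫ b, V (b, s) * f b ∂ν := by
  have hc : ∀ (W : B × UnitAddCircle → ℝ), StronglyMeasurable W → MemLp W 2 (ν.prod volume) →
      ∀ f : C(B, ℝ), StronglyMeasurable (fun z => W z * f z.1) ∧
        MemLp (fun z => W z * f z.1) 2 (ν.prod volume) := by
    intro W hWm hW f
    have hf : Continuous fun z : B × UnitAddCircle => f z.1 := by fun_prop
    refine ⟨hWm.mul hf.stronglyMeasurable, ?_⟩
    refine hW.of_le_mul (c := ‖f‖) (hWm.mul hf.stronglyMeasurable).aestronglyMeasurable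
      (Eventually.of_forall fun z => ?_)
    rw [norm_mul, mul_comm]
    gcongr
    exact f.norm_coe_le_norm _
  obtain ⟨hUgm, hUg⟩ := hc U hUm hU2 g
  obtain ⟨hVfm, hVf⟩ := hc V hVm hV2 f
  set F : B × UnitAddCircle → ℝ := fun z => U z * g z.1 + V z * f z.1 with hF
  have hFm : StronglyMeasurable F := hUgm.add hVfm
  have hF2 : MemLp F 2 (ν.prod volume) := hUg.add hVf
  have hsw := memLp_partial_real volume ν (fun p : UnitAddCircle × B => F p.swap)
    (hFm.comp_measurable measurable_swap)
    (hF2.comp_measurePreserving Measure.measurePreserving_swap)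
  have hz := uniq1 (B := B) (fun s => ((∫ b, F (b, s) ∂ν : ℝ) : ℂ)) hsw.2.ofReal (by
    intro k0
    have hfo := memLp_mul_fo ν (fun z => (F z : ℂ))
      (Complex.continuous_ofReal.comp_stronglyMeasurable hFm) hF2.ofReal k0
    have e1 : ∫ z, (F z : ℂ) * fourier k0 z.2 ∂(ν.prod volume) = 0 := by
      have e2 : ∀ z : B × UnitAddCircle, (F z : ℂ) * fourier k0 z.2 =
          ((U z * g z.1 : ℝ) : ℂ) * fourier k0 z.2 + ((V z * f z.1 : ℝ) : ℂ) * fourier k0 z.2 := by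
        intro z; simp only [hF]; push_cast; ring
      simp only [e2]
      rw [integral_add]
      · have h1 := h k0
        have a1 : ∫ z, ((U z * g z.1 : ℝ) : ℂ) * fourier k0 z.2 ∂(ν.prod volume) =
            ∫ z, (((g z.1 : ℝ) : ℂ) * fourier k0 z.2) * (U z : ℂ) ∂(ν.prod volume) := by
          congr 1; ext z; push_cast; ring
        have a2 : ∫ z, ((V z * f z.1 : ℝ) : ℂ) * fourier k0 z.2 ∂(ν.prod volume) =
            ∫ z, (((f z.1 : ℝ) : ℂ) * fourier k0 z.2) * (V z : ℂ) ∂(ν.prod volume) := by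
          congr 1; ext z; push_cast; ring
        rw [a1, a2, h1]; ring
      · exact (memLp_mul_fo ν _ (Complex.continuous_ofReal.comp_stronglyMeasurable hUgm)
          hUg.ofReal k0).2.integrable (by norm_num)
      · exact (memLp_mul_fo ν _ (Complex.continuous_ofReal.comp_stronglyMeasurable hVfm)
          hVf.ofReal k0).2.integrable (by norm_num)
    rw [integral_prod_symm _ (hfo.2.integrable (by norm_num))] at e1
    rw [← e1]
    congr 1; ext s
    rw [← integral_complex_ofReal, ← integral_mul_const])
  have i1 := (hUg.integrable (by norm_num)).prod_left_ae
  have i2 := (hVf.integrable (by norm_num)).prod_left_ae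
  filter_upwards [hz, i1, i2] with s hs h1 h2
  have : ∫ b, F (b, s) ∂ν = 0 := by
    rw [Pi.zero_apply] at hs
    exact_mod_cast hs
  simp only [hF] at this
  rw [integral_add h1 h2] at this
  linarith

end

lemma core {B : Type*} [MetricSpace B] [CompactSpace B] [MeasurableSpace B] [BorelSpace B]
    [Nonempty B] {N : ℕ} {S : Set (ℝ × Vn N)}
    (hSo : IsOpen S) [IsFiniteMeasure (volume.restrict S)] (r : ℝ × Vn N → B)
    (hr : Continuous r) (ι : C(B, ℝ × Vn N)) (hι : ∀ q ∈ S, ι (r q) = q) (ε : ℕ → ℝ)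
    (hεpos : ∀ n, 0 < ε n) (hεlim : Tendsto ε atTop (nhds 0))
    (u : ℕ → ℝ × Vn N → ℝ) (d : Fin N → ℕ → ℝ × Vn N → ℝ)
    (hu : ∀ n, MemLp (u n) 2 (volume.restrict S)) (hd : ∀ j n, MemLp (d j n) 2 (volume.restrict S))
    (C : ℝ) (huC : ∀ n, ∫ q in S, (u n q) ^ 2 ≤ C) (hdC : ∀ j n, ∫ q in S, (d j n q) ^ 2 ≤ C)
    (hw : ∀ n j ζ, IsTest S ζ → ∫ q in S, u n q * fderiv ℝ ζ q ((0 : ℝ), Pi.single j 1)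
      = - ∫ q in S, d j n q * ζ q) :
    ∃ φ : ℕ → ℕ, StrictMono φ ∧ ∃ (Ub : B × UnitAddCircle → ℝ) (Vb : Fin N → B × UnitAddCircle → ℝ)
      (w1 : KK B N → ℝ) (D : Fin N → KK B N → ℝ),
      (StronglyMeasurable Ub ∧ MemLp Ub 2 (((volume.restrict S).map r).prod volume)) ∧
      (∀ j, StronglyMeasurable (Vb j) ∧ MemLp (Vb j) 2 (((volume.restrict S).map r).prod volume)) ∧
      (∀ j ζ, IsTest S ζ → ∀ᵐ s ∂(volume : Measure UnitAddCircle),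
        ∫ b, Ub (b, s) * fderiv ℝ ζ (ι b) ((0 : ℝ), Pi.single j 1) ∂((volume.restrict S).map r) =
          - ∫ b, Vb j (b, s) * ζ (ι b) ∂((volume.restrict S).map r)) ∧
      (StronglyMeasurable w1 ∧ MemLp w1 2 (mK (volume.restrict S) r)) ∧
      (∀ j, StronglyMeasurable (D j) ∧ MemLp (D j) 2 (mK (volume.restrict S) r)) ∧
      (∀ ω, ∫ y, w1 (ω, y) = 0) ∧
      (∀ j, ∀ᵐ ω ∂(((volume.restrict S).map r).prod volume), ∫ y, D j (ω, y) = 0) ∧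
      (∀ ω j, ∀ ζ : Vn N → ℝ, ContDiff ℝ (⊤ : ℕ∞) ζ → HasCompactSupport ζ →
        ∫ y, w1 (ω, tmk y) * pdN ζ j y = - ∫ y, D j (ω, tmk y) * ζ y) ∧
      (∀ Ψ : C(KK B N, ℝ), Tendsto (fun n => ∫ q in S, u (φ n) q * Ψ (rho r (ε (φ n)) q)) atTop
        (nhds (∫ p, Ub p.1 * Ψ p ∂(mK (volume.restrict S) r)))) ∧
      (∀ j, ∀ Ψ : C(KK B N, ℝ), Tendsto (fun n => ∫ q in S, d j (φ n) q * Ψ (rho r (ε (φ n)) q)) atTop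
        (nhds (∫ p, (Vb j p.1 + D j p) * Ψ p ∂(mK (volume.restrict S) r)))) ∧
      ((∃ C' : ℝ, ∀ n ζ, IsTest S ζ → |∫ q in S, u n q * fderiv ℝ ζ q ((1 : ℝ), (0 : Vn N))|
        ≤ C' * Real.sqrt (∫ q in S, ((ζ q) ^ 2 + ∑ j, (fderiv ℝ ζ q ((0 : ℝ), Pi.single j 1)) ^ 2))) →
        ∃ w : B → ℝ, Ub =ᵐ[((volume.restrict S).map r).prod volume] fun z => w z.1) := by
  obtain ⟨φ, hφ, W, hW⟩ := tsc_family (mK (volume.restrict S) r) (volume.restrict S)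
    (fun n => rho r (ε n)) (fun n => (continuous_rho r hr _).measurable)
    (equidist_real S hSo.measurableSet r hr ε hεpos hεlim)
    (ι := Option (Fin N)) (fun i => i.elim u d)
    (fun i n => by cases i <;> simp [hu, hd]) C
    (fun i n => by
      cases i
      · exact huC n
      · exact hdC _ n)
  set U := W none with hUdef
  set V : Fin N → KK B N → ℝ := fun j => W (some j) with hVdef
  obtain ⟨hUm, hU2, hUl⟩ := hW none
  have hVm : ∀ j, StronglyMeasurable (V j) := fun j => (hW (some j)).1
  have hV2 : ∀ j, MemLp (V j) 2 (mK (volume.restrict S) r) := fun j => (hW (some j)).2.1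
  have hVl := fun j => (hW (some j)).2.2
  simp only [Option.elim] at hUl hVl
  have hεpos' : ∀ n, 0 < ε (φ n) := fun n => hεpos _
  have hεlim' : Tendsto (fun n => ε (φ n)) atTop (nhds 0) := hεlim.comp hφ.tendsto_atTop
  have hUC : LimC S r (fun n => ε (φ n)) (fun n => u (φ n)) U :=
    limC_of_real r hr _ _ U (fun n => hu _) hU2 hUl
  have hVC : ∀ j, LimC S r (fun n => ε (φ n)) (fun n => d j (φ n)) (V j) := fun j =>
    limC_of_real r hr _ _ (V j) (fun n => hd j _) (hV2 j) (hVl j)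
  have hA := ident_a hSo r ι hι _ hεpos' hεlim' (fun n => u (φ n)) (fun j n => d j (φ n))
    (fun n => hu _) (fun j n => hd j _) U V hUC hVC (fun n => hw _)
  have hB := ident_b hSo r ι hι _ hεpos' hεlim' (fun n => u (φ n)) (fun j n => d j (φ n))
    (fun n => hu _) (fun j n => hd j _) U V hUC hVC (fun n => hw _)
  have hCC := ident_c hSo r ι hι _ (fun n => u (φ n)) (fun j n => d j (φ n))
    (fun n => hu _) (fun j n => hd j _) U V hUC hVC (fun n => hw _)
  have hUy := core_yconst hSo r hr ι hι U hUm hU2 hA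
  obtain ⟨w1, D, hw1m, hw12, hD, hmean, hgrad, hDV⟩ := lemC (((volume.restrict S).map r).prod volume)
    V hVm hV2 (core_curl hSo r hr ι hι V hVm hV2 hB)
  have hUb := memLp_partial_real (((volume.restrict S).map r).prod volume) volume U hUm hU2
  have hVb := fun j => memLp_partial_real (((volume.restrict S).map r).prod volume) volume (V j) (hVm j) (hV2 j)
  refine ⟨φ, hφ, fun z => ∫ y, U (z, y), fun j z => ∫ y, V j (z, y), w1, D, hUb, hVb, ?_,
    ⟨hw1m, hw12⟩, hD, hmean, ?_, hgrad, ?_, ?_, ?_⟩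
  · intro j ζ hζ
    refine core_weak _ _ _ hUb.1 (hVb j).1 hUb.2 (hVb j).2
      ⟨fun b => ζ (ι b), hζ.continuous.comp ι.continuous⟩
      ⟨fun b => fderiv ℝ ζ (ι b) ((0 : ℝ), Pi.single j 1), (hζ.pd _).continuous.comp ι.continuous⟩ ?_
    intro k0
    have := hCC k0 ζ hζ j
    unfold mK at this
    rw [echar_int0 _ U hU2, echar_int0 _ (V j) (hV2 j)] at this
    exact this
  · intro j
    filter_upwards [Measure.ae_ae_of_ae_prod (hDV j),
      memLp_fiber _ volume _ (hVm j) (hV2 j)] with ω h1 h2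
    rw [integral_congr_ae h1, integral_sub (h2.integrable (by norm_num)) (integrable_const _)]
    simp
  · intro Ψ
    have e : ∫ p, U p * Ψ p ∂(mK (volume.restrict S) r) =
      ∫ p, (∫ y, U (p.1, y)) * Ψ p ∂(mK (volume.restrict S) r) :=
      integral_congr_ae (hUy.mono fun p hp => by simp only [hp])
    rw [← e]
    exact hUl Ψ
  · intro j Ψ
    have e : ∫ p, V j p * Ψ p ∂(mK (volume.restrict S) r) =
      ∫ p, ((∫ y, V j (p.1, y)) + D j p) * Ψ p ∂(mK (volume.restrict S) r) :=
      integral_congr_ae ((hDV j).mono fun p hp => by simp only [hp]; ring)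
    rw [← e]
    exact hVl j Ψ
  · rintro ⟨C', hC'⟩
    refine ⟨fun b => ∫ s, ∫ y, U ((b, s), y), ?_⟩
    exact core_sconst hSo r hr ι hι U hUm hU2
      (ident_d hSo r ι hι _ hεpos' hεlim' (fun n => u (φ n)) (fun n => hu _) U hUC C' (fun n => hC' _))

lemma amgm_int {X : Type*} [MeasurableSpace X] (μ : Measure X) (a w : X → ℝ) (ha : MemLp a 2 μ)
    (hw : MemLp w 2 μ) (η : ℝ) (hη : 0 < η) :
    |∫ x, a x * w x ∂μ| ≤ η * (∫ x, (a x) ^ 2 ∂μ) + η⁻¹ * ∫ x, (w x) ^ 2 ∂μ := by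
  have h1 := ha.integrable_sq
  have h2 := hw.integrable_sq
  have e : ∫ x, (η * (a x) ^ 2 + η⁻¹ * (w x) ^ 2) ∂μ
      = η * (∫ x, (a x) ^ 2 ∂μ) + η⁻¹ * ∫ x, (w x) ^ 2 ∂μ := by
    rw [integral_add (h1.const_mul _) (h2.const_mul _), integral_const_mul, integral_const_mul]
  have i0 : Integrable (fun x => η * (a x) ^ 2 + η⁻¹ * (w x) ^ 2) μ :=
    (h1.const_mul _).add (h2.const_mul _)
  rw [← e, ← Real.norm_eq_abs]
  refine norm_integral_le_of_norm_le i0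
    (Eventually.of_forall fun x => ?_)
  rw [Real.norm_eq_abs, abs_le]
  have h3 : η⁻¹ * (w x) ^ 2 = η * (η⁻¹ * w x) ^ 2 := by field_simp
  have h4 : a x * w x = η * (a x * (η⁻¹ * w x)) := by field_simp
  rw [h3, h4]
  constructor
  · nlinarith [mul_nonneg hη.le (sq_nonneg (a x + η⁻¹ * w x)), mul_nonneg hη.le (sq_nonneg (a x)), mul_nonneg hη.le (sq_nonneg (η⁻¹ * w x))]
  · nlinarith [mul_nonneg hη.le (sq_nonneg (a x - η⁻¹ * w x)), mul_nonneg hη.le (sq_nonneg (a x)), mul_nonneg hη.le (sq_nonneg (η⁻¹ * w x))]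

lemma weak_dense {N : ℕ} (μ : Measure (ℝ × Vn N)) [IsFiniteMeasure μ]
    (a : ℕ → ℝ × Vn N → ℝ) (a0 : ℝ × Vn N → ℝ)
    (ha : ∀ n, MemLp (a n) 2 μ) (ha0 : MemLp a0 2 μ) (C : ℝ) (hC : ∀ n, ∫ x, (a n x) ^ 2 ∂μ ≤ C)
    (h : ∀ g : ℝ × Vn N → ℝ, Continuous g → Tendsto (fun n => ∫ x, a n x * g x ∂μ) atTop
      (nhds (∫ x, a0 x * g x ∂μ)))
    (v : ℝ × Vn N → ℝ) (hv : MemLp v 2 μ) :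
    Tendsto (fun n => ∫ x, a n x * v x ∂μ) atTop (nhds (∫ x, a0 x * v x ∂μ)) := by
  rw [Metric.tendsto_atTop]
  intro e he
  set C' := max (max C (∫ x, (a0 x) ^ 2 ∂μ)) 1 with hC'
  have hC1 : 1 ≤ C' := le_max_right _ _
  have hC2 : ∀ n, ∫ x, (a n x) ^ 2 ∂μ ≤ C' := fun n =>
    (hC n).trans ((le_max_left _ _).trans (le_max_left _ _))
  have hC3 : ∫ x, (a0 x) ^ 2 ∂μ ≤ C' := (le_max_right _ _).trans (le_max_left _ _)
  set η := e / (8 * C') with hη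
  have hηpos : 0 < η := by positivity
  have hηC : η * C' = e / 8 := by rw [hη]; field_simp
  have hv' : MemLp v (ENNReal.ofReal 2) μ := by simpa using hv
  obtain ⟨g, -, hg1, hg2, hg3⟩ := hv'.exists_hasCompactSupport_integral_rpow_sub_le (by norm_num)
    (ε := η * (e / 8)) (by positivity)
  have hg3' : MemLp g 2 μ := by simpa using hg3
  have hw := hv.sub hg3'
  have hg1' : ∫ x, ((v - g) x) ^ 2 ∂μ ≤ η * (e / 8) := by
    refine le_trans (le_of_eq ?_) hg1
    congr 1; ext x
    simp [Real.rpow_two]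
  have key : ∀ b : ℝ × Vn N → ℝ, MemLp b 2 μ → ∫ x, (b x) ^ 2 ∂μ ≤ C' →
      |∫ x, b x * v x ∂μ - ∫ x, b x * g x ∂μ| ≤ e / 4 := by
    intro b hb hbC
    have i1 : Integrable (fun x => b x * v x) μ := hb.integrable_mul hv
    have i2 : Integrable (fun x => b x * g x) μ := hb.integrable_mul hg3'
    rw [← integral_sub i1 i2]
    have h1 := amgm_int μ b (v - g) hb hw η hηpos
    have h2 : ∫ x, (b x * v x - b x * g x) ∂μ = ∫ x, b x * (v - g) x ∂μ := by
      congr 1; ext x; simp [mul_sub]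
    rw [h2]
    refine h1.trans ?_
    have h3 : η * ∫ x, (b x) ^ 2 ∂μ ≤ e / 8 := by
      rw [← hηC]; gcongr
    have h4 : η⁻¹ * ∫ x, ((v - g) x) ^ 2 ∂μ ≤ e / 8 := by
      have : η⁻¹ * (η * (e / 8)) = e / 8 := by field_simp
      rw [← this]; gcongr
    linarith
  obtain ⟨n0, hn0⟩ := Metric.tendsto_atTop.1 (h g hg2) (e / 4) (by positivity)
  refine ⟨n0, fun n hn => ?_⟩
  have h1 := key (a n) (ha n) (hC2 n)
  have h2 := key a0 ha0 hC3
  have h3 := hn0 n hn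
  rw [Real.dist_eq] at h3 ⊢
  rw [abs_lt] at h3 ⊢
  rw [abs_le] at h1 h2
  constructor <;> linarith [h1.1, h1.2, h2.1, h2.2, h3.1, h3.2]

lemma coe_eq_imp (x y : ℝ) (h : (x : UnitAddCircle) = y) : ∃ l : ℤ, x = y + l := by
  have h1 := (QuotientAddGroup.eq (s := AddSubgroup.zmultiples (1 : ℝ))).1 h
  obtain ⟨l, hl⟩ := AddSubgroup.mem_zmultiples_iff.1 h1
  refine ⟨-l, ?_⟩
  simp at hl
  push_cast
  linarith

lemma coe_add_int (x : ℝ) (l : ℤ) : ((x + l : ℝ) : UnitAddCircle) = x := by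
  refine ((QuotientAddGroup.eq (s := AddSubgroup.zmultiples (1 : ℝ))).2 ?_).symm
  exact AddSubgroup.mem_zmultiples_iff.2 ⟨l, by simp⟩

lemma descend {B : Type*} [TopologicalSpace B] {N : ℕ} (ι : C(B, ℝ × Vn N))
    (ψ : ℝ → Vn N → ℝ → Vn N → ℝ)
    (hc : Continuous fun q : (ℝ × Vn N) × ℝ × Vn N => ψ q.1.1 q.1.2 q.2.1 q.2.2)
    (hp : ∀ t x, ZPer (ψ t x)) :
    ∃ Ψ : C(KK B N, ℝ), ∀ b (τ : ℝ) y, Ψ ((b, (τ : UnitAddCircle)), tmk y) = ψ (ι b).1 (ι b).2 τ y := by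
  have q1 : IsOpenQuotientMap (fun x : ℝ => (x : UnitAddCircle)) :=
    QuotientAddGroup.isOpenQuotientMap_mk
  have q2 : IsOpenQuotientMap (tmk (N := N)) :=
    IsOpenQuotientMap.piMap (fun _ => q1)
  have q3 : IsOpenQuotientMap (Prod.map (Prod.map (id : B → B) (fun x : ℝ => (x : UnitAddCircle))) (tmk (N := N))) :=
    (IsOpenQuotientMap.id.prodMap q1).prodMap q2
  let qm : C((B × ℝ) × Vn N, KK B N) := ⟨_, q3.continuous⟩
  have hq : Topology.IsQuotientMap qm := q3.isQuotientMap
  let g : C((B × ℝ) × Vn N, ℝ) := ⟨fun p => ψ (ι p.1.1).1 (ι p.1.1).2 p.1.2 p.2,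
    hc.comp (by fun_prop : Continuous fun p : (B × ℝ) × Vn N => ((ι p.1.1), p.1.2, p.2))⟩
  have hf : Function.FactorsThrough g qm := by
    rintro ⟨⟨b, τ⟩, y⟩ ⟨⟨b', τ'⟩, y'⟩ h
    have h0 : ((b, (τ : UnitAddCircle)), tmk y) = ((b', (τ' : UnitAddCircle)), tmk y') := h
    simp only [Prod.mk.injEq] at h0
    obtain ⟨⟨rfl, h1⟩, h2⟩ := h0
    obtain ⟨l, rfl⟩ := coe_eq_imp _ _ h1
    choose kk hkk using fun i => coe_eq_imp (y i) (y' i) (congrFun h2 i)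
    have : y = fun i => y' i + kk i := funext hkk
    rw [this]
    exact hp _ _ _ _ _ _
  refine ⟨hq.lift g hf, fun b τ y => ?_⟩
  exact DFunLike.congr_fun (hq.lift_comp g hf) ((b, τ), y)

/-- The projection to the compact space. -/
def PM {B : Type*} {N : ℕ} (r : ℝ × Vn N → B) (z : ((ℝ × Vn N) × ℝ) × Vn N) : KK B N :=
  ((r z.1.1, (z.1.2 : UnitAddCircle)), tmk z.2)

lemma mp_P1 {B : Type*} [MeasurableSpace B] {N : ℕ} (μ : Measure (ℝ × Vn N)) [IsFiniteMeasure μ]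
    (r : ℝ × Vn N → B) (hr : Measurable r) :
    MeasurePreserving (fun z : (ℝ × Vn N) × ℝ => (r z.1, (z.2 : UnitAddCircle)))
      (μ.prod (volume.restrict cellT)) ((μ.map r).prod volume) :=
  (hr.measurePreserving μ).prod mp_circle_Ioo

lemma mp_PM {B : Type*} [MeasurableSpace B] {N : ℕ} (μ : Measure (ℝ × Vn N)) [IsFiniteMeasure μ]
    (r : ℝ × Vn N → B) (hr : Measurable r) :
    MeasurePreserving (PM r)
      ((μ.prod (volume.restrict cellT)).prod (volume.restrict (cellY N))) (mK μ r) :=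
  (mp_P1 μ r hr).prod mp_tmk_cell

lemma iter_int2 {B : Type*} [MeasurableSpace B] {N : ℕ} (μ : Measure (ℝ × Vn N)) [IsFiniteMeasure μ]
    (r : ℝ × Vn N → B) (hr : Measurable r) (F : B × UnitAddCircle → ℝ)
    (hF : Integrable F ((μ.map r).prod volume)) :
    ∫ p, F p ∂((μ.map r).prod volume) = ∫ q, (∫ τ in cellT, F (r q, (τ : UnitAddCircle))) ∂μ := by
  have hm := mp_P1 μ r hr
  rw [← hm.map_eq, integral_map hm.measurable.aemeasurable (by rw [hm.map_eq]; exact hF.aestronglyMeasurable)]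
  exact integral_prod _ (hm.integrable_comp_of_integrable hF)

lemma iter_int {B : Type*} [MeasurableSpace B] {N : ℕ} (μ : Measure (ℝ × Vn N)) [IsFiniteMeasure μ]
    (r : ℝ × Vn N → B) (hr : Measurable r) (F : KK B N → ℝ) (hF : Integrable F (mK μ r)) :
    ∫ p, F p ∂(mK μ r) = ∫ q, (∫ τ in cellT, ∫ y in cellY N, F ((r q, (τ : UnitAddCircle)), tmk y)) ∂μ := by
  have hm := mp_PM μ r hr
  rw [← hm.map_eq, integral_map hm.measurable.aemeasurable (by rw [hm.map_eq]; exact hF.aestronglyMeasurable)]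
  have hi := hm.integrable_comp_of_integrable hF
  refine (integral_prod _ hi).trans ?_
  exact integral_prod _ hi.integral_prod_left

lemma cont_memLp {B : Type*} [MetricSpace B] [CompactSpace B] [MeasurableSpace B] [BorelSpace B]
    {N : ℕ} (m : Measure (KK B N)) [IsFiniteMeasure m] (Ψ : C(KK B N, ℝ)) : MemLp Ψ 2 m :=
  MemLp.of_bound Ψ.continuous.aestronglyMeasurable ‖Ψ‖
    (Eventually.of_forall Ψ.norm_coe_le_norm)

lemma wts_lift {B : Type*} [MetricSpace B] [CompactSpace B] [MeasurableSpace B] [BorelSpace B]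
    {N : ℕ} {S : Set (ℝ × Vn N)}
    (hSo : IsOpen S) [IsFiniteMeasure (volume.restrict S)] (r : ℝ × Vn N → B)
    (hr : Continuous r) (ι : C(B, ℝ × Vn N)) (hι : ∀ q ∈ S, ι (r q) = q) (e : ℕ → ℝ)
    (a : ℕ → ℝ × Vn N → ℝ) (F : KK B N → ℝ) (hF : MemLp F 2 (mK (volume.restrict S) r))
    (h : ∀ Ψ : C(KK B N, ℝ), Tendsto (fun n => ∫ q in S, a n q * Ψ (rho r (e n) q)) atTop
        (nhds (∫ p, F p * Ψ p ∂(mK (volume.restrict S) r)))) :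
    WeakTwoScale N S 2 e a (fun q τ y => F ((r q, (τ : UnitAddCircle)), tmk y)) := by
  intro ψ hψ
  obtain ⟨Ψ, hΨ⟩ := descend ι ψ hψ.cont hψ.per
  have h1 := h Ψ
  have hi : Integrable (fun p => F p * Ψ p) (mK (volume.restrict S) r) :=
    hF.integrable_mul (cont_memLp _ Ψ)
  rw [iter_int _ r hr.measurable _ hi] at h1
  have e1 : ∀ n, ∫ q in S, a n q * Ψ (rho r (e n) q) =
      ∫ q in S, a n q * ψ q.1 q.2 (q.1 / e n) (fun i => q.2 i / e n) := by
    intro n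
    refine setIntegral_congr_fun hSo.measurableSet fun q hq => ?_
    simp only [rho, hΨ, hι q hq]
  have e2 : ∫ q in S, (∫ τ in cellT, ∫ y in cellY N, F ((r q, (τ : UnitAddCircle)), tmk y)
        * Ψ ((r q, (τ : UnitAddCircle)), tmk y)) =
      ∫ q in S, ∫ τ in cellT, ∫ y in cellY N, F ((r q, (τ : UnitAddCircle)), tmk y)
        * ψ q.1 q.2 τ y := by
    refine setIntegral_congr_fun hSo.measurableSet fun q hq => ?_
    simp only [hΨ, hι q hq]
  rw [e2] at h1
  simp only [e1] at h1
  exact h1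

lemma weak_lift {B : Type*} [MetricSpace B] [CompactSpace B] [MeasurableSpace B] [BorelSpace B]
    {N : ℕ} {S : Set (ℝ × Vn N)}
    (hSo : IsOpen S) [IsFiniteMeasure (volume.restrict S)] (r : ℝ × Vn N → B)
    (hr : Continuous r) (ι : C(B, ℝ × Vn N)) (hι : ∀ q ∈ S, ι (r q) = q) (e : ℕ → ℝ)
    (a : ℕ → ℝ × Vn N → ℝ) (ha : ∀ n, MemLp (a n) 2 (volume.restrict S)) (C : ℝ)
    (haC : ∀ n, ∫ q in S, (a n q) ^ 2 ≤ C)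
    (V : B × UnitAddCircle → ℝ) (hVm : StronglyMeasurable V)
    (hV : MemLp V 2 (((volume.restrict S).map r).prod volume))
    (D : KK B N → ℝ) (hD : MemLp D 2 (mK (volume.restrict S) r))
    (hD0 : ∀ᵐ ω ∂(((volume.restrict S).map r).prod volume), ∫ y, D (ω, y) = 0)
    (h : ∀ Ψ : C(KK B N, ℝ), Tendsto (fun n => ∫ q in S, a n q * Ψ (rho r (e n) q)) atTop
        (nhds (∫ p, (V p.1 + D p) * Ψ p ∂(mK (volume.restrict S) r))))
    (v : ℝ × Vn N → ℝ) (hv : MemLp v 2 (volume.restrict S)) :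
    Tendsto (fun n => ∫ q in S, a n q * v q) atTop
      (nhds (∫ q in S, (∫ τ in cellT, V (r q, (τ : UnitAddCircle))) * v q)) := by
  have hmr := hr.measurable.measurePreserving (volume.restrict S)
  have hτ : ∀ b, ∫ τ in cellT, V (b, (τ : UnitAddCircle)) = ∫ s, V (b, s) := by
    intro b
    rw [← mp_circle_Ioo.map_eq, integral_map mp_circle_Ioo.measurable.aemeasurable]
    exact (hVm.comp_measurable measurable_prodMk_left).aestronglyMeasurable
  have ha0 : MemLp (fun q => ∫ τ in cellT, V (r q, (τ : UnitAddCircle))) 2 (volume.restrict S) := by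
    simp only [hτ]
    exact (memLp_partial_real _ volume V hVm hV).2.comp_measurePreserving hmr
  refine weak_dense (volume.restrict S) a _ ha ha0 C haC ?_ v hv
  intro g hg
  let Ψ : C(KK B N, ℝ) := ⟨fun p => g (ι p.1.1), hg.comp (by fun_prop)⟩
  have h1 := h Ψ
  have e1 : ∀ n, ∫ q in S, a n q * Ψ (rho r (e n) q) = ∫ q in S, a n q * g q := by
    intro n
    refine setIntegral_congr_fun hSo.measurableSet fun q hq => ?_
    simp only [rho, Ψ, ContinuousMap.coe_mk, hι q hq]
  have hVK : MemLp (fun p : KK B N => V p.1) 2 (mK (volume.restrict S) r) := 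
    hV.comp_measurePreserving (measurePreserving_fst)
  have hVD : MemLp (fun p : KK B N => V p.1 + D p) 2 (mK (volume.restrict S) r) := hVK.add hD
  have hi : Integrable (fun p => (V p.1 + D p) * Ψ p) (mK (volume.restrict S) r) :=
    hVD.integrable_mul (cont_memLp _ Ψ)
  have e2 : ∫ p, (V p.1 + D p) * Ψ p ∂(mK (volume.restrict S) r)
      = ∫ z, V z * g (ι z.1) ∂(((volume.restrict S).map r).prod volume) := by
    unfold mK at hi ⊢
    rw [integral_prod _ hi]
    have hDi : Integrable D ((((volume.restrict S).map r).prod volume).prod volume) :=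
      hD.integrable one_le_two
    refine integral_congr_ae ?_
    filter_upwards [hD0, hDi.prod_right_ae] with ω h1 h2
    simp only [Ψ, ContinuousMap.coe_mk]
    rw [integral_mul_const, integral_add (integrable_const _) h2, h1]
    simp
  have hg2 : MemLp (fun z : B × UnitAddCircle => g (ι z.1)) 2
      (((volume.restrict S).map r).prod volume) := by
    let G : C(B × UnitAddCircle, ℝ) := ⟨fun z => g (ι z.1), hg.comp (by fun_prop)⟩
    exact MemLp.of_bound G.continuous.aestronglyMeasurable ‖G‖
      (Eventually.of_forall G.norm_coe_le_norm)
  have i3 : Integrable (fun z => V z * g (ι z.1)) (((volume.restrict S).map r).prod volume) :=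
    hV.integrable_mul hg2
  rw [e2, iter_int2 _ r hr.measurable _ i3] at h1
  simp only [e1] at h1
  refine h1.congr' (Eventually.of_forall fun n => rfl) |>.trans (le_of_eq ?_)
  congr 1
  refine setIntegral_congr_fun hSo.measurableSet fun q hq => ?_
  simp only [hι q hq]
  rw [integral_mul_const]

/-- The retraction onto a box. -/
def ret {N : ℕ} (a b : ℝ × Vn N) (hab : a ≤ b) (q : ℝ × Vn N) : Set.Icc a b :=
  ⟨(q ⊓ b) ⊔ a, le_sup_right, sup_le inf_le_right hab⟩

lemma continuous_ret {N : ℕ} (a b : ℝ × Vn N) (hab : a ≤ b) : Continuous (ret a b hab) := by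
  unfold ret
  refine Continuous.subtype_mk ?_ _
  have h1 : Continuous fun q : ℝ × Vn N => max (min q.1 b.1) a.1 := by fun_prop
  have h2 : Continuous fun q : ℝ × Vn N => (fun i => max (min (q.2 i) (b.2 i)) (a.2 i)) := by
    fun_prop
  exact h1.prodMk h2

lemma sq_dom {N : ℕ} (μ : Measure (ℝ × Vn N)) (u : ℝ × Vn N → ℝ) (Du : ℝ × Vn N → Vn N)
    (hi : Integrable (fun q => (u q) ^ 2 + ∑ j, (Du q j) ^ 2) μ) (f : ℝ × Vn N → ℝ)
    (hf : AEStronglyMeasurable f μ) (hle : ∀ q, (f q) ^ 2 ≤ (u q) ^ 2 + ∑ j, (Du q j) ^ 2) :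
    MemLp f 2 μ ∧ ∫ q, (f q) ^ 2 ∂μ ≤ ∫ q, ((u q) ^ 2 + ∑ j, (Du q j) ^ 2) ∂μ := by
  have h1 : Integrable (fun q => (f q) ^ 2) μ := by
    refine hi.mono' (hf.pow 2) (Eventually.of_forall fun q => ?_)
    rw [Real.norm_eq_abs, abs_of_nonneg (sq_nonneg _)]
    exact hle q
  exact ⟨(memLp_two_iff_integrable_sq hf).2 h1, integral_mono h1 hi hle⟩

/-- Theorem 3.3, two-scale compactness for gradients: if `(u_ε)` is
bounded in `L²(0,T;H¹(Q))` (with weak spatial gradients `Du_ε`), then along a subsequence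
`u_ε → u₀` in `L²(Q_T)`-weak two-scale, `u_ε ⇀ ũ₀ = ∫_𝒯 u₀ dτ` in `L²(0,T;H¹(Q))`-weak,
and `∂u_ε/∂x_j → ∂u₀/∂x_j + ∂u₁/∂y_j` in `L²(Q_T)`-weak two-scale, with
`u₀ ∈ L²(0,T;L²(𝒯;H¹(Q)))` and `u₁ ∈ L²(Q_T;L²(𝒯;H¹_#(𝒴)))`.  If moreover
`(∂u_ε/∂t)` is bounded in `L²(0,T;(H¹(Q))*)`, then `u₀` is independent of `τ`. -/
theorem two_scale_compactness_gradients
    (N : ℕ) (Q : Set (Vn N)) (hQo : IsOpen Q) (hQb : Bornology.IsBounded Q)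
    (T : ℝ) (hT : 0 < T)
    (ε : ℕ → ℝ) (hεpos : ∀ n, 0 < ε n) (hεlim : Tendsto ε atTop (nhds 0))
    (u : ℕ → ℝ × Vn N → ℝ) (Du : ℕ → ℝ × Vn N → Vn N)
    (humeas : ∀ n, AEStronglyMeasurable (u n) (volume.restrict (Set.Ioo 0 T ×ˢ Q)))
    (hDumeas : ∀ n j, AEStronglyMeasurable (fun q => Du n q j)
      (volume.restrict (Set.Ioo 0 T ×ˢ Q)))
    -- `Du n` is the weak spatial gradient of `u n` on `Q_T`
    (hweakgrad : ∀ n (j : Fin N), ∀ ζ : ℝ × Vn N → ℝ, ContDiff ℝ (⊤ : ℕ∞) ζ →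
      HasCompactSupport ζ → tsupport ζ ⊆ Set.Ioo 0 T ×ˢ Q →
      ∫ q in Set.Ioo 0 T ×ˢ Q, u n q * fderiv ℝ ζ q ((0 : ℝ), Pi.single j 1)
        = - ∫ q in Set.Ioo 0 T ×ˢ Q, Du n q j * ζ q)
    (huint : ∀ n, IntegrableOn
      (fun q => (u n q) ^ 2 + ∑ j, (Du n q j) ^ 2) (Set.Ioo 0 T ×ˢ Q) volume)
    -- boundedness in L²(0,T;H¹(Q))
    (hbdd : ∃ C : ℝ, ∀ n,
      (∫ q in Set.Ioo 0 T ×ˢ Q, ((u n q) ^ 2 + ∑ j, (Du n q j) ^ 2)) ≤ C) :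
    ∃ φs : ℕ → ℕ, StrictMono φs ∧
    ∃ (u₀ : ℝ × Vn N → ℝ → ℝ) (Du₀ : ℝ × Vn N → ℝ → Vn N)
      (u₁ : ℝ × Vn N → ℝ → Vn N → ℝ) (Dyu₁ : ℝ × Vn N → ℝ → Vn N → Vn N),
      -- u₀ ∈ L²(0,T; L²(𝒯; H¹(Q))), with weak x-gradient Du₀
      IntegrableOn (fun z : (ℝ × Vn N) × ℝ =>
          (u₀ z.1 z.2) ^ 2 + ∑ j, (Du₀ z.1 z.2 j) ^ 2)
        ((Set.Ioo 0 T ×ˢ Q) ×ˢ cellT) volume ∧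
      (∀ (j : Fin N), ∀ ζ : ℝ × Vn N → ℝ, ContDiff ℝ (⊤ : ℕ∞) ζ → HasCompactSupport ζ →
        tsupport ζ ⊆ Set.Ioo 0 T ×ˢ Q →
        ∀ᵐ τ ∂(volume.restrict cellT),
          ∫ q in Set.Ioo 0 T ×ˢ Q, u₀ q τ * fderiv ℝ ζ q ((0 : ℝ), Pi.single j 1)
            = - ∫ q in Set.Ioo 0 T ×ˢ Q, Du₀ q τ j * ζ q) ∧
      -- u₁ ∈ L²(Q_T; L²(𝒯; H¹_#(𝒴))): 𝒴-periodic, mean zero, weak y-gradient Dyu₁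
      (∀ q τ (y : Vn N) (kk : Fin N → ℤ), u₁ q τ (fun i => y i + kk i) = u₁ q τ y) ∧
      (∀ q τ, ∫ y in cellY N, u₁ q τ y = 0) ∧
      (∀ q τ (j : Fin N), ∀ ζ : Vn N → ℝ, ContDiff ℝ (⊤ : ℕ∞) ζ → HasCompactSupport ζ →
        ∫ y, u₁ q τ y * pdN ζ j y = - ∫ y, Dyu₁ q τ y j * ζ y) ∧
      IntegrableOn (fun z : ((ℝ × Vn N) × ℝ) × Vn N =>
          (u₁ z.1.1 z.1.2 z.2) ^ 2 + ∑ j, (Dyu₁ z.1.1 z.1.2 z.2 j) ^ 2)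
        (((Set.Ioo 0 T ×ˢ Q) ×ˢ cellT) ×ˢ cellY N) volume ∧
      -- u_ε → u₀ in L²(Q_T)-weak two-scale
      WeakTwoScale N (Set.Ioo 0 T ×ˢ Q) 2 (fun n => ε (φs n)) (fun n => u (φs n))
        (fun q τ _ => u₀ q τ) ∧
      -- u_ε ⇀ ũ₀ = ∫_𝒯 u₀ dτ in L²(0,T;H¹(Q))-weak
      (∀ v : ℝ × Vn N → ℝ, MemLp v 2 (volume.restrict (Set.Ioo 0 T ×ˢ Q)) →
        Tendsto (fun n => ∫ q in Set.Ioo 0 T ×ˢ Q, u (φs n) q * v q) atTop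
          (nhds (∫ q in Set.Ioo 0 T ×ˢ Q, (∫ τ in cellT, u₀ q τ) * v q)) ∧
        ∀ (j : Fin N),
          Tendsto (fun n => ∫ q in Set.Ioo 0 T ×ˢ Q, Du (φs n) q j * v q) atTop
            (nhds (∫ q in Set.Ioo 0 T ×ˢ Q, (∫ τ in cellT, Du₀ q τ j) * v q))) ∧
      -- ∂u_ε/∂x_j → ∂u₀/∂x_j + ∂u₁/∂y_j in L²(Q_T)-weak two-scale
      (∀ (j : Fin N),
        WeakTwoScale N (Set.Ioo 0 T ×ˢ Q) 2 (fun n => ε (φs n))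
          (fun n q => Du (φs n) q j)
          (fun q τ y => Du₀ q τ j + Dyu₁ q τ y j)) ∧
      -- if moreover (∂u_ε/∂t) is bounded in L²(0,T;(H¹(Q))*), u₀ is independent of τ
      ((∃ C : ℝ, ∀ n, ∀ ζ : ℝ × Vn N → ℝ, ContDiff ℝ (⊤ : ℕ∞) ζ → HasCompactSupport ζ →
          tsupport ζ ⊆ Set.Ioo 0 T ×ˢ Q →
          |∫ q in Set.Ioo 0 T ×ˢ Q, u n q * fderiv ℝ ζ q ((1 : ℝ), (0 : Vn N))|
            ≤ C * Real.sqrt (∫ q in Set.Ioo 0 T ×ˢ Q,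
                ((ζ q) ^ 2 + ∑ j, (fderiv ℝ ζ q ((0 : ℝ), Pi.single j 1)) ^ 2))) →
        ∃ w : ℝ × Vn N → ℝ,
          ∀ᵐ z ∂(volume.restrict ((Set.Ioo 0 T ×ˢ Q) ×ˢ cellT)),
            u₀ (z : (ℝ × Vn N) × ℝ).1 z.2 = w z.1) := by
  set S : Set (ℝ × Vn N) := Set.Ioo 0 T ×ˢ Q with hS
  have hSo : IsOpen S := isOpen_Ioo.prod hQo
  have hSb : Bornology.IsBounded S := (Metric.isBounded_Ioo 0 T).prod hQb
  have : IsFiniteMeasure (volume.restrict S) :=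
    ⟨by rw [Measure.restrict_apply_univ]; exact hSb.measure_lt_top⟩
  obtain ⟨a, b, hab, hSab⟩ : ∃ a b : ℝ × Vn N, a ≤ b ∧ ∀ q ∈ S, a ≤ q ∧ q ≤ b := by
    obtain ⟨a, ha⟩ := hSb.bddBelow
    obtain ⟨b, hb⟩ := hSb.bddAbove
    exact ⟨a ⊓ b, b, inf_le_right, fun q hq => ⟨inf_le_left.trans (ha hq), hb hq⟩⟩
  let r : ℝ × Vn N → Set.Icc a b := ret a b hab
  have hr : Continuous r := continuous_ret a b hab
  let ι : C(Set.Icc a b, ℝ × Vn N) := ⟨Subtype.val, continuous_subtype_val⟩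
  have hι : ∀ q ∈ S, ι (r q) = q := by
    intro q hq
    change (q ⊓ b) ⊔ a = q
    rw [inf_eq_left.2 (hSab q hq).2, sup_eq_left.2 (hSab q hq).1]
  have : Nonempty (Set.Icc a b) := ⟨⟨a, le_rfl, hab⟩⟩
  obtain ⟨C, hC⟩ := hbdd
  have hub := fun n => sq_dom (volume.restrict S) (u n) (Du n) (huint n) (u n) (humeas n)
    (fun q => le_add_of_nonneg_right (Finset.sum_nonneg fun j _ => sq_nonneg _))
  have hdb := fun j n => sq_dom (volume.restrict S) (u n) (Du n) (huint n) (fun q => Du n q j)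
    (hDumeas n j) (fun q => (Finset.single_le_sum (f := fun j => (Du n q j) ^ 2)
      (fun j _ => sq_nonneg _) (Finset.mem_univ j)).trans (le_add_of_nonneg_left (sq_nonneg _)))
  have huC : ∀ n, ∫ q in S, (u n q) ^ 2 ≤ C := fun n => (hub n).2.trans (hC n)
  have hdC : ∀ j n, ∫ q in S, (Du n q j) ^ 2 ≤ C := fun j n => (hdb j n).2.trans (hC n)
  obtain ⟨φ, hφ, Ub, Vb, w1, D, ⟨hUm, hU2⟩, hV, hweak, ⟨hw1m, hw12⟩, hD, hmean, hD0, hgrad,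
    hlU, hlV, htime⟩ := core hSo r hr ι hι ε hεpos hεlim u (fun j n q => Du n q j)
      (fun n => (hub n).1) (fun j n => (hdb j n).1) C huC hdC
      (fun n j ζ hζ => hweakgrad n j ζ hζ.1 hζ.2.1 hζ.2.2)
  have hP1 := mp_P1 (volume.restrict S) r hr.measurable
  have hPM := mp_PM (volume.restrict S) r hr.measurable
  have em1 : (volume : Measure ((ℝ × Vn N) × ℝ)).restrict (S ×ˢ cellT) =
      (volume.restrict S).prod (volume.restrict cellT) := by
    rw [Measure.prod_restrict]; rfl
  have em2 : (volume : Measure (((ℝ × Vn N) × ℝ) × Vn N)).restrict ((S ×ˢ cellT) ×ˢ cellY N) =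
      ((volume.restrict S).prod (volume.restrict cellT)).prod (volume.restrict (cellY N)) := by
    rw [← em1, Measure.prod_restrict]; rfl
  have hVK : ∀ (V : Set.Icc a b × UnitAddCircle → ℝ),
      MemLp V 2 (((volume.restrict S).map r).prod volume) →
      MemLp (fun p : KK (Set.Icc a b) N => V p.1) 2 (mK (volume.restrict S) r) :=
    fun V hV => hV.comp_measurePreserving measurePreserving_fst
  refine ⟨φ, hφ, fun q τ => Ub (r q, (τ : UnitAddCircle)),
    fun q τ j => Vb j (r q, (τ : UnitAddCircle)),
    fun q τ y => w1 ((r q, (τ : UnitAddCircle)), tmk y),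
    fun q τ y j => D j ((r q, (τ : UnitAddCircle)), tmk y), ?_, ?_, ?_, ?_, ?_, ?_, ?_, ?_, ?_, ?_⟩
  · have h : Integrable (fun z => (Ub z) ^ 2 + ∑ j, (Vb j z) ^ 2)
        (((volume.restrict S).map r).prod volume) :=
      hU2.integrable_sq.add (integrable_finsetSum _ fun j _ => (hV j).2.integrable_sq)
    unfold IntegrableOn
    rw [em1]
    exact hP1.integrable_comp_of_integrable h
  · intro j ζ h1 h2 h3
    have hζ : IsTest S ζ := ⟨h1, h2, h3⟩
    filter_upwards [mp_circle_Ioo.quasiMeasurePreserving.ae (hweak j ζ hζ)] with τ hτ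
    have sm : ∀ (V : Set.Icc a b × UnitAddCircle → ℝ), StronglyMeasurable V →
        StronglyMeasurable fun x => V (x, (τ : UnitAddCircle)) :=
      fun V hV => hV.comp_measurable measurable_prodMk_right
    have c1 : Continuous fun x : Set.Icc a b => ζ (ι x) := hζ.continuous.comp ι.continuous
    have c2 : Continuous fun x : Set.Icc a b => fderiv ℝ ζ (ι x) ((0 : ℝ), Pi.single j 1) :=
      (hζ.pd _).continuous.comp ι.continuous
    have s1 : StronglyMeasurable fun x => Ub (x, (τ : UnitAddCircle)) *
        fderiv ℝ ζ (ι x) ((0 : ℝ), Pi.single j 1) := (sm _ hUm).mul c2.stronglyMeasurable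
    have s2 : StronglyMeasurable fun x => Vb j (x, (τ : UnitAddCircle)) * ζ (ι x) :=
      (sm _ (hV j).1).mul c1.stronglyMeasurable
    rw [integral_map hr.measurable.aemeasurable s1.aestronglyMeasurable,
      integral_map hr.measurable.aemeasurable s2.aestronglyMeasurable] at hτ
    have e1 : ∫ q in S, Ub (r q, (τ : UnitAddCircle)) *
          fderiv ℝ ζ (ι (r q)) ((0 : ℝ), Pi.single j 1) =
        ∫ q in S, Ub (r q, (τ : UnitAddCircle)) * fderiv ℝ ζ q ((0 : ℝ), Pi.single j 1) :=
      setIntegral_congr_fun hSo.measurableSet fun q hq => by simp only [hι q hq]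
    have e2 : ∫ q in S, Vb j (r q, (τ : UnitAddCircle)) * ζ (ι (r q)) =
        ∫ q in S, Vb j (r q, (τ : UnitAddCircle)) * ζ q :=
      setIntegral_congr_fun hSo.measurableSet fun q hq => by simp only [hι q hq]
    rw [e1, e2] at hτ
    exact hτ
  · intro q τ y kk
    have : tmk (fun i => y i + kk i) = tmk y := funext fun i => coe_add_int _ _
    simp only [this]
  · intro q τ
    rw [← hmean (r q, (τ : UnitAddCircle)), ← mp_tmk_cell.map_eq,
      integral_map mp_tmk_cell.measurable.aemeasurable]
    exact (hw1m.comp_measurable measurable_prodMk_left).aestronglyMeasurable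
  · intro q τ j ζ h1 h2
    exact hgrad _ j ζ h1 h2
  · have h : Integrable (fun p => (w1 p) ^ 2 + ∑ j, (D j p) ^ 2) (mK (volume.restrict S) r) :=
      hw12.integrable_sq.add (integrable_finsetSum _ fun j _ => (hD j).2.integrable_sq)
    unfold IntegrableOn
    rw [em2]
    exact hPM.integrable_comp_of_integrable h
  · exact wts_lift hSo r hr ι hι (fun n => ε (φ n)) (fun n => u (φ n)) (fun p => Ub p.1)
      (hVK _ hU2) hlU
  · intro v hv
    refine ⟨?_, fun j => ?_⟩
    · refine weak_lift hSo r hr ι hι (fun n => ε (φ n)) (fun n => u (φ n)) (fun n => (hub _).1) C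
        (fun n => huC _) Ub hUm hU2 (fun _ => 0) MemLp.zero' (by simp) ?_ v hv
      simpa using hlU
    · exact weak_lift hSo r hr ι hι (fun n => ε (φ n)) (fun n q => Du (φ n) q j)
        (fun n => (hdb j _).1) C
        (fun n => hdC j _) (Vb j) (hV j).1 (hV j).2 (D j) (hD j).2 (hD0 j) (hlV j) v hv
  · intro j
    exact wts_lift hSo r hr ι hι (fun n => ε (φ n)) (fun n q => Du (φ n) q j)
      (fun p => Vb j p.1 + D j p) ((hVK _ (hV j).2).add (hD j).2) (hlV j)
  · rintro ⟨C', hC'⟩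
    obtain ⟨w, hw⟩ := htime ⟨C', fun n ζ hζ => hC' n ζ hζ.1 hζ.2.1 hζ.2.2⟩
    refine ⟨fun q => w (r q), ?_⟩
    rw [em1]
    exact hP1.quasiMeasurePreserving.ae hw
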